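/- arXiv:2201.10418 — 3 statements merged into one kernel-verified Lean document; each statement's English description precedes it below -/
import Mathlib

section
/- Let m ≥ 4 and let ε ∈ [0,1]. Every strategyproof SDS that is anonymous, neutral, (1−ε)/m-ex post efficient, and exactly ε-randomly dictatorial is a convex combination of the uniform random dictatorship and the uniform lottery. -/
open Finset

noncomputable section

/-- A preference profile: each voter's strict linear order on the `m`
alternatives is encoded as a ranking permutation, where `R i x` is the rank of
alternative `x` for voter `i` (rank `0` = most preferred). Voter `i` strictly
prefers `x` to `y` iff `R i x < R i y`. -/
abbrev Profile (n m : ℕ) := Fin n → Equiv.Perm (Fin m)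

/-- `F R x` is the probability that the social decision scheme `F` assigns to
alternative `x` at profile `R`; `IsSDS F` says every `F R` is a lottery. -/
def IsSDS {n m : ℕ} (F : Profile n m → Fin m → ℝ) : Prop :=
  (∀ R x, 0 ≤ F R x) ∧ ∀ R, ∑ x, F R x = 1

/-- Stochastic-dominance preference of voter `i` (with preferences as in `R`):
lottery `p` is weakly preferred to lottery `q`. -/
def SDPref {n m : ℕ} (R : Profile n m) (i : Fin n) (p q : Fin m → ℝ) : Prop :=
  ∀ x : Fin m,
    ∑ y ∈ univ.filter (fun y => R i y < R i x), q y ≤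
      ∑ y ∈ univ.filter (fun y => R i y < R i x), p y

/-- Strategyproofness: the truthful outcome is SD-preferred to any outcome
obtainable by a unilateral deviation. -/
def Strategyproof {n m : ℕ} (F : Profile n m → Fin m → ℝ) : Prop :=
  ∀ (R R' : Profile n m) (i : Fin n),
    (∀ j, j ≠ i → R j = R' j) → SDPref R i (F R) (F R')

/-- Anonymity: permuting the voters does not change the outcome. -/
def Anonymous {n m : ℕ} (F : Profile n m → Fin m → ℝ) : Prop :=
  ∀ (π : Equiv.Perm (Fin n)) (R : Profile n m), F (fun i => R (π i)) = F R

/-- The profile obtained from `R` by relabeling the alternatives by `τ`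
(in `relabel τ R`, alternative `τ x` gets the rank that `x` has in `R`). -/
def relabel {n m : ℕ} (τ : Equiv.Perm (Fin m)) (R : Profile n m) : Profile n m :=
  fun i => τ.symm.trans (R i)

/-- Neutrality: relabeling the alternatives permutes the outcome accordingly. -/
def Neutral {n m : ℕ} (F : Profile n m → Fin m → ℝ) : Prop :=
  ∀ (τ : Equiv.Perm (Fin m)) (R : Profile n m) (x : Fin m),
    F (relabel τ R) (τ x) = F R x

/-- The supporting size `n_{xy}(R)`: the number of voters preferring `x` to `y`. -/
def suppSize {n m : ℕ} (R : Profile n m) (x y : Fin m) : ℕ :=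
  (univ.filter (fun i => R i x < R i y)).card

/-- `x` is the Condorcet winner of `R`. -/
def CondorcetWinner {n m : ℕ} (R : Profile n m) (x : Fin m) : Prop :=
  ∀ y, y ≠ x → suppSize R y x < suppSize R x y

/-- `α`-Condorcet-consistency. -/
def CondorcetConsistent {n m : ℕ} (F : Profile n m → Fin m → ℝ) (α : ℝ) : Prop :=
  ∀ R x, CondorcetWinner R x → α ≤ F R x

/-- `x` is Pareto-dominated in `R`. -/
def ParetoDominated {n m : ℕ} (R : Profile n m) (x : Fin m) : Prop :=
  ∃ y, ∀ i, R i y < R i x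

/-- `β`-ex post efficiency. -/
def ExPostEff {n m : ℕ} (F : Profile n m → Fin m → ℝ) (β : ℝ) : Prop :=
  ∀ R x, ParetoDominated R x → F R x ≤ β

/-- The probability that the dictatorial SDS of voter `i` assigns to `x`:
`1` if `x` is voter `i`'s most preferred alternative and `0` otherwise. -/
def dictProb {n m : ℕ} (R : Profile n m) (i : Fin n) (x : Fin m) : ℝ :=
  if ∀ y, R i x ≤ R i y then 1 else 0

/-- `d` is a random dictatorship. -/
def IsRandDict {n m : ℕ} (d : Profile n m → Fin m → ℝ) : Prop :=
  ∃ δ : Fin n → ℝ, (∀ i, 0 ≤ δ i) ∧ ∑ i, δ i = 1 ∧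
    ∀ R x, d R x = ∑ i, δ i * dictProb R i x

/-- `F` can be written as `γ d + (1 - γ) g` with `d` a random dictatorship and
`g` a strategyproof SDS. -/
def DecomposesAt {n m : ℕ} (F : Profile n m → Fin m → ℝ) (γ : ℝ) : Prop :=
  ∃ d g : Profile n m → Fin m → ℝ, IsRandDict d ∧ IsSDS g ∧ Strategyproof g ∧
    ∀ R x, F R x = γ * d R x + (1 - γ) * g R x

/-- `F` is `γ`-randomly dictatorial: `γ ∈ [0,1]` is the maximal value admitting
a decomposition `F = γ d + (1 - γ) g` as above. -/
def RandDictDegree {n m : ℕ} (F : Profile n m → Fin m → ℝ) (γ : ℝ) : Prop :=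
  0 ≤ γ ∧ γ ≤ 1 ∧ DecomposesAt F γ ∧
    ∀ γ', 0 ≤ γ' → γ' ≤ 1 → DecomposesAt F γ' → γ' ≤ γ

/-- The profile `R^{i:yx}` obtained from `R` by swapping `x` and `y` in voter
`i`'s preference relation (used when `x` is ranked directly above `y`). -/
def swapTop {n m : ℕ} (R : Profile n m) (i : Fin n) (x y : Fin m) : Profile n m :=
  Function.update R i ((R i).trans (Equiv.swap (R i x) (R i y)))

/-- The weight vector `b` defining the randomized Copeland rule:
`b k = 2/(m(m-1))` for `k > n/2`, `b k = 1/(m(m-1))` for `k = n/2`, `b k = 0`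
for `k < n/2`. -/
def copelandWeight (n m : ℕ) (k : ℕ) : ℝ :=
  if n < 2 * k then 2 / ((m : ℝ) * ((m : ℝ) - 1))
  else if 2 * k = n then 1 / ((m : ℝ) * ((m : ℝ) - 1))
  else 0

/-- The randomized Copeland rule `f_C(R, x) = ∑_{y ≠ x} b_{n_{xy}(R)}`. -/
def randCopeland (n m : ℕ) : Profile n m → Fin m → ℝ :=
  fun R x => ∑ y ∈ univ.filter (fun y => y ≠ x), copelandWeight n m (suppSize R x y)

/-- A point voting SDS, given by a scoring vector `a` (indexed by ranks
`0, …, m-1`, i.e. `a k` is the score of the `(k+1)`-st ranked alternative). -/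
structure PointVoting (n m : ℕ) where
  a : ℕ → ℝ
  mono : ∀ k l : ℕ, k ≤ l → l < m → a l ≤ a k
  nonneg : ∀ k : ℕ, k < m → 0 ≤ a k
  sum_eq : ∑ k ∈ Finset.range m, a k = 1 / (n : ℝ)

/-- The value of a point voting SDS. -/
def pvVal {n m : ℕ} (pv : PointVoting n m) : Profile n m → Fin m → ℝ :=
  fun R x => ∑ i, pv.a (R i x : ℕ)

/-- A supporting size SDS, given by a vector `b` indexed by supporting sizes
`0, …, n`. -/
structure SupportingSize (n m : ℕ) where
  b : ℕ → ℝ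
  mono : ∀ k l : ℕ, k ≤ l → l ≤ n → b k ≤ b l
  nonneg : ∀ k : ℕ, k ≤ n → 0 ≤ b k
  pair_eq : ∀ k : ℕ, k ≤ n → b k + b (n - k) = 2 / ((m : ℝ) * ((m : ℝ) - 1))

/-- The value of a supporting size SDS. -/
def ssVal {n m : ℕ} (S : SupportingSize n m) : Profile n m → Fin m → ℝ :=
  fun R x => ∑ y ∈ univ.filter (fun y => y ≠ x), S.b (suppSize R x y)

/-- A duple: a strategyproof SDS that puts positive probability on at most two
fixed alternatives. -/
def IsDuple {n m : ℕ} (g : Profile n m → Fin m → ℝ) : Prop :=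
  IsSDS g ∧ Strategyproof g ∧ ∃ x y : Fin m, ∀ R z, z ≠ x → z ≠ y → g R z = 0

/-- A unilateral: a strategyproof SDS that depends only on the preferences of a
single fixed voter. -/
def IsUnilateral {n m : ℕ} (g : Profile n m → Fin m → ℝ) : Prop :=
  IsSDS g ∧ Strategyproof g ∧
    ∃ i : Fin n, ∀ R R' : Profile n m, R i = R' i → g R = g R'

/-- `F` is a convex combination of SDSs satisfying the property `P`. -/
def MixOf {n m : ℕ} (P : (Profile n m → Fin m → ℝ) → Prop)
    (F : Profile n m → Fin m → ℝ) : Prop :=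
  ∃ (K : ℕ) (w : Fin K → ℝ) (g : Fin K → Profile n m → Fin m → ℝ),
    (∀ k, 0 ≤ w k) ∧ ∑ k, w k = 1 ∧ (∀ k, P (g k)) ∧
    ∀ R x, F R x = ∑ k, w k * g k R x

/-- The uniform random dictatorship. -/
def uniformRD (n m : ℕ) : Profile n m → Fin m → ℝ :=
  fun R x => (1 / (n : ℝ)) * ∑ i, dictProb R i x

/-- The uniform lottery. -/
def uniformLottery (n m : ℕ) : Profile n m → Fin m → ℝ :=
  fun _ _ => 1 / (m : ℝ)

lemma adj_const {m : ℕ} {α : Type*} (f : Equiv.Perm (Fin m) → α)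
    (h : ∀ (r : Equiv.Perm (Fin m)) (a b : Fin m), a.val + 1 = b.val →
      f (r.trans (Equiv.swap a b)) = f r) (r r' : Equiv.Perm (Fin m)) : f r = f r' := by
  rcases m with _ | k
  · rw [Subsingleton.elim r r']
  · have key : ∀ (σ : Equiv.Perm (Fin (k+1))) (r : Equiv.Perm (Fin (k+1))), f (σ * r) = f r := by
      intro σ
      have hσ : σ ∈ Submonoid.closure
          (Set.range fun i : Fin k => Equiv.swap i.castSucc i.succ) := by
        rw [Equiv.Perm.mclosure_swap_castSucc_succ]; trivial
      induction hσ using Submonoid.closure_induction with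
      | mem x hx =>
        obtain ⟨i, rfl⟩ := hx
        intro r
        exact h r _ _ (by simp)
      | one => intro r; simp
      | mul x y _ _ hx hy => intro r; rw [mul_assoc, hx, hy]
    have := key (r' * r⁻¹) r
    simpa using this.symm

lemma swap_trans_eq {m : ℕ} (r : Equiv.Perm (Fin m)) (x y : Fin m) :
    (Equiv.swap x y).trans r = r.trans (Equiv.swap (r x) (r y)) := by
  have := Equiv.mul_swap_eq_swap_mul r x y
  exact this

lemma conn_xy {m : ℕ} {α : Type*} (f : Equiv.Perm (Fin m) → α) (x y : Fin m)
    (h : ∀ (r : Equiv.Perm (Fin m)) (a b : Fin m), a.val + 1 = b.val → r x < r y →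
      Equiv.swap a b (r x) < Equiv.swap a b (r y) →
      f (r.trans (Equiv.swap a b)) = f r) (r r' : Equiv.Perm (Fin m))
    (hr : r x < r y) (hr' : r' x < r' y) : f r = f r' := by
  have hxy : x ≠ y := by rintro rfl; exact lt_irrefl _ hr
  have swlt : ∀ (u v a b : Fin m), a.val + 1 = b.val → u < v →
      ¬ Equiv.swap a b u < Equiv.swap a b v → u = a ∧ v = b := by
    intro u v a b hab huv hn
    simp only [Equiv.swap_apply_def] at hn
    simp only [Fin.lt_def, Fin.ext_iff] at *
    split_ifs at hn <;> omega
  have := adj_const (fun r => f (if r x < r y then r else (Equiv.swap x y).trans r)) (by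
    intro r a b hab
    change f (if Equiv.swap a b (r x) < Equiv.swap a b (r y) then _ else _) = _
    have hne : r x ≠ r y := fun e => hxy (r.injective e)
    by_cases h1 : r x < r y
    · by_cases h2 : Equiv.swap a b (r x) < Equiv.swap a b (r y)
      · rw [if_pos h2, if_pos h1]; exact h r a b hab h1 h2
      · rw [if_neg h2, if_pos h1]
        obtain ⟨rfl, rfl⟩ := swlt _ _ _ _ hab h1 h2
        rw [← swap_trans_eq]
        congr 1
        ext z; simp
    · have h1' : r y < r x := lt_of_le_of_ne (not_lt.1 h1) (Ne.symm hne)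
      by_cases h2 : Equiv.swap a b (r y) < Equiv.swap a b (r x)
      · rw [if_neg (not_lt.2 h2.le), if_neg h1]
        exact h ((Equiv.swap x y).trans r) a b hab (by simpa using h1') (by simpa using h2)
      · obtain ⟨rfl, rfl⟩ := swlt _ _ _ _ hab h1' h2
        rw [if_neg h1, if_pos (by simpa using h1'), swap_trans_eq, Equiv.swap_comm]) r r'
  simpa only [if_pos hr, if_pos hr'] using this

lemma swapTop_same {n m : ℕ} (R : Profile n m) (i : Fin n) (x y : Fin m) :
    swapTop R i x y i = (R i).trans (Equiv.swap (R i x) (R i y)) := by simp [swapTop]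

lemma swapTop_ne {n m : ℕ} (R : Profile n m) (i : Fin n) (x y : Fin m) (j : Fin n) (h : j ≠ i) :
    swapTop R i x y j = R j := by simp [swapTop, h]

lemma sp_prefix {n m : ℕ} {F : Profile n m → Fin m → ℝ} (hF : IsSDS F) (hsp : Strategyproof F)
    (R R' : Profile n m) (i : Fin n) (h : ∀ j, j ≠ i → R j = R' j) (r : ℕ) :
    ∑ z ∈ univ.filter (fun z => (R i z).val < r), F R' z ≤
      ∑ z ∈ univ.filter (fun z => (R i z).val < r), F R z := by
  by_cases hr : r < m
  · have := hsp R R' i h ((R i).symm ⟨r, hr⟩)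
    simpa [Fin.lt_def] using this
  · have : univ.filter (fun z => (R i z).val < r) = univ := by
      apply Finset.filter_true_of_mem
      intro z _; have := (R i z).isLt; omega
    rw [this, hF.2, hF.2]

lemma prefix_succ {m : ℕ} (e : Equiv.Perm (Fin m)) (f : Fin m → ℝ) (x : Fin m) :
    ∑ z ∈ univ.filter (fun z => (e z).val < (e x).val + 1), f z =
      ∑ z ∈ univ.filter (fun z => (e z).val < (e x).val), f z + f x := by
  have : univ.filter (fun z => (e z).val < (e x).val + 1) =
      insert x (univ.filter (fun z => (e z).val < (e x).val)) := by
    ext z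
    simp only [mem_filter, mem_univ, true_and, mem_insert]
    constructor
    · intro h
      by_cases hz : (e z).val < (e x).val
      · exact Or.inr hz
      · left; apply e.injective; ext; omega
    · rintro (rfl | h) <;> omega
  rw [this, sum_insert (by simp)]; ring

lemma localized {n m : ℕ} {F : Profile n m → Fin m → ℝ} (hF : IsSDS F) (hsp : Strategyproof F)
    (R : Profile n m) (i : Fin n) (x y : Fin m) (hxy : (R i x).val + 1 = (R i y).val) :
    (∀ z, z ≠ x → z ≠ y → F (swapTop R i x y) z = F R z) ∧
    F (swapTop R i x y) x ≤ F R x ∧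
    F (swapTop R i x y) x + F (swapTop R i x y) y = F R x + F R y := by
  set R' := swapTop R i x y with hR'
  have hoff : ∀ j, j ≠ i → R j = R' j := fun j hj => (swapTop_ne R i x y j hj).symm
  have hsets : ∀ r : ℕ, r ≠ (R i y).val →
      univ.filter (fun z => (R' i z).val < r) = univ.filter (fun z => (R i z).val < r) := by
    intro r hr
    ext z
    simp only [mem_filter, mem_univ, true_and, hR', swapTop_same, Equiv.trans_apply,
      Equiv.swap_apply_def, Fin.ext_iff]
    split_ifs <;> omega
  have heq : ∀ r : ℕ, r ≠ (R i y).val →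
      ∑ z ∈ univ.filter (fun z => (R i z).val < r), F R' z =
      ∑ z ∈ univ.filter (fun z => (R i z).val < r), F R z := by
    intro r hr
    apply le_antisymm (sp_prefix hF hsp R R' i hoff r)
    have := sp_prefix hF hsp R' R i (fun j hj => (hoff j hj).symm) r
    rwa [hsets r hr] at this
  have hne : ∀ u v, u ≠ v → (R i u).val ≠ (R i v).val := fun u v h e =>
    h ((R i).injective (Fin.ext e))
  refine ⟨?_, ?_, ?_⟩
  · intro z hzx hzy
    have e1 := heq _ (hne z y hzy)
    have e2 := heq ((R i z).val + 1) (by have := hne z x hzx; omega)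
    rw [prefix_succ, prefix_succ] at e2
    linarith
  · have e1 := heq (R i x).val (by omega)
    have e2 := sp_prefix hF hsp R R' i hoff ((R i x).val + 1)
    rw [prefix_succ, prefix_succ] at e2
    linarith
  · have e1 := heq (R i x).val (by omega)
    have e2 := heq ((R i y).val + 1) (by omega)
    rw [prefix_succ, prefix_succ, ← hxy, prefix_succ, prefix_succ] at e2
    linarith

/-- canonical two-type profile -/
def Qp (n : ℕ) {m : ℕ} (a b : Fin m) (T : Finset (Fin n)) : Profile n m :=
  fun j => if j ∈ T then 1 else Equiv.swap a b

def Hc {n m : ℕ} (F : Profile n m → Fin m → ℝ) (a b : Fin m) (k : ℕ) : ℝ :=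
  F (Qp n a b (univ.filter (fun j => j.val < k))) a

def Dl {n m : ℕ} (F : Profile n m → Fin m → ℝ) (a b : Fin m) (k : ℕ) : ℝ :=
  Hc F a b (k+1) - Hc F a b k

lemma Qp_anon {n m : ℕ} {F : Profile n m → Fin m → ℝ} (han : Anonymous F) (a b : Fin m)
    (T T' : Finset (Fin n)) (h : T.card = T'.card) : F (Qp n a b T) = F (Qp n a b T') := by
  obtain ⟨e⟩ : Nonempty ({x // x ∈ T} ≃ {x // x ∈ T'}) :=
    ⟨Fintype.equivOfCardEq (by simpa using h)⟩
  have := han (e.extendSubtype) (Qp n a b T')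
  rw [← this]
  congr 1
  funext j
  by_cases hj : j ∈ T
  · have := e.extendSubtype_mem j hj
    simp [Qp, hj, this]
  · have := e.extendSubtype_not_mem j hj
    simp [Qp, hj, this]

lemma Qp_Hc {n m : ℕ} {F : Profile n m → Fin m → ℝ} (han : Anonymous F) (a b : Fin m)
    (T : Finset (Fin n)) : F (Qp n a b T) a = Hc F a b T.card := by
  unfold Hc
  rw [Qp_anon han a b T]
  have hT : T.card ≤ n := by simpa using T.card_le_univ
  have : (univ.filter (fun j : Fin n => j.val < T.card)).card = T.card := by
    rw [Fin.card_filter_val_lt]; omega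
  exact this.symm

lemma step_one {n m : ℕ} {F : Profile n m → Fin m → ℝ} (hF : IsSDS F) (hsp : Strategyproof F)
    (R : Profile n m) (i : Fin n) (x y : Fin m) (hxy : (R i x).val + 1 = (R i y).val)
    (j : Fin n) (hj : j ≠ i) (z w : Fin m) (hzw : (R j z).val + 1 = (R j w).val)
    (h : (R j x < R j y ↔ swapTop R j z w j x < swapTop R j z w j y)) :
    F (swapTop R j z w) x - F (swapTop (swapTop R j z w) i x y) x =
      F R x - F (swapTop R i x y) x := by
  have hRi : swapTop R j z w i = R i := swapTop_ne _ _ _ _ _ hj.symm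
  have hRj : swapTop R i x y j = R j := swapTop_ne _ _ _ _ _ hj
  have hcomm : swapTop (swapTop R j z w) i x y = swapTop (swapTop R i x y) j z w := by
    have e1 : swapTop (swapTop R j z w) i x y = Function.update (swapTop R j z w) i
      ((R i).trans (Equiv.swap (R i x) (R i y))) := by rw [swapTop, hRi]
    have e2 : swapTop (swapTop R i x y) j z w = Function.update (swapTop R i x y) j
      ((R j).trans (Equiv.swap (R j z) (R j w))) := by rw [swapTop, hRj]
    rw [e1, e2, swapTop, swapTop, Function.update_comm hj]
  have l1 := localized hF hsp R i x y hxy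
  have l2 := localized hF hsp R j z w hzw
  have l3 := localized hF hsp (swapTop R i x y) j z w (by rw [hRj]; exact hzw)
  have l4 := localized hF hsp (swapTop R j z w) i x y (by rw [hRi]; exact hxy)
  rw [← hcomm] at l3
  have hxy' : x ≠ y := by rintro rfl; omega
  by_cases hx : x ≠ z ∧ x ≠ w
  · rw [l2.1 x hx.1 hx.2, l3.1 x hx.1 hx.2]
  · have hy : y ≠ z ∧ y ≠ w := by
      by_contra hy
      have : (x = z ∧ y = w) ∨ (x = w ∧ y = z) := by
        by_cases e1 : x = z
        · left; refine ⟨e1, ?_⟩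
          by_contra e2; exact hy ⟨fun e => hxy' (e1.trans e.symm), e2⟩
        · right
          have e3 : x = w := by by_contra e2; exact hx ⟨e1, e2⟩
          refine ⟨e3, ?_⟩
          by_contra e2; exact hy ⟨e2, fun e => hxy' (e3.trans e.symm)⟩
      rcases this with ⟨rfl, rfl⟩ | ⟨rfl, rfl⟩
      · simp only [swapTop_same, Equiv.trans_apply, Equiv.swap_apply_left,
          Equiv.swap_apply_right, Fin.lt_def] at h
        omega
      · simp only [swapTop_same, Equiv.trans_apply, Equiv.swap_apply_left,
          Equiv.swap_apply_right, Fin.lt_def] at h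
        omega
    have := l2.1 y hy.1 hy.2
    have := l3.1 y hy.1 hy.2
    linarith [l1.2.2, l4.2.2]

lemma step_update {n m : ℕ} {F : Profile n m → Fin m → ℝ} (hF : IsSDS F) (hsp : Strategyproof F)
    (R : Profile n m) (i : Fin n) (x y : Fin m) (hxy : (R i x).val + 1 = (R i y).val)
    (j : Fin n) (hj : j ≠ i) (r : Equiv.Perm (Fin m))
    (h : (R j x < R j y ↔ r x < r y)) :
    F (Function.update R j r) x - F (swapTop (Function.update R j r) i x y) x =
      F R x - F (swapTop R i x y) x := by
  set f : Equiv.Perm (Fin m) → ℝ := fun r =>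
    F (Function.update R j r) x - F (swapTop (Function.update R j r) i x y) x with hf
  have hstep : ∀ (r : Equiv.Perm (Fin m)) (a b : Fin m), a.val + 1 = b.val →
      (r x < r y ↔ Equiv.swap a b (r x) < Equiv.swap a b (r y)) →
      f (r.trans (Equiv.swap a b)) = f r := by
    intro r a b hab hlt
    have := step_one hF hsp (Function.update R j r) i x y (by simpa [hj.symm] using hxy)
      j hj (r.symm a) (r.symm b) (by simpa using hab)
      (by simpa [swapTop_same] using hlt)
    have e : swapTop (Function.update R j r) j (r.symm a) (r.symm b) =
        Function.update R j (r.trans (Equiv.swap a b)) := by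
      simp [swapTop]
    rw [e] at this
    exact this
  have hxy' : x ≠ y := by rintro rfl; omega
  have goal : f r = f (R j) := by
    by_cases hlt : R j x < R j y
    · exact conn_xy f x y (fun r a b hab h1 h2 => hstep r a b hab (by simp [h1, h2]))
        _ _ (h.1 hlt) hlt
    · have h1 : R j y < R j x := lt_of_le_of_ne (not_lt.1 hlt)
        (fun e => hxy' ((R j).injective e).symm)
      have h2 : r y < r x := lt_of_le_of_ne (not_lt.1 (fun e => hlt (h.2 e)))
        (fun e => hxy' (r.injective e).symm)
      exact conn_xy f y x (fun r a b hab h1 h2 => hstep r a b hab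
        (by simp [not_lt.2 h1.le, not_lt.2 h2.le])) _ _ h2 h1
  rw [hf] at goal
  simpa using goal

lemma step_all {n m : ℕ} {F : Profile n m → Fin m → ℝ} (hF : IsSDS F) (hsp : Strategyproof F)
    (R Q : Profile n m) (i : Fin n) (x y : Fin m) (hxy : (R i x).val + 1 = (R i y).val)
    (hi : Q i = R i) (h : ∀ j, (R j x < R j y ↔ Q j x < Q j y)) :
    F Q x - F (swapTop Q i x y) x = F R x - F (swapTop R i x y) x := by
  have key : ∀ A : Finset (Fin n), F (fun j => if j ∈ A then Q j else R j) x -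
      F (swapTop (fun j => if j ∈ A then Q j else R j) i x y) x =
      F R x - F (swapTop R i x y) x := by
    intro A
    induction A using Finset.induction_on with
    | empty => simp
    | insert j A hj ih =>
      have e : (fun k => if k ∈ insert j A then Q k else R k) =
          Function.update (fun k => if k ∈ A then Q k else R k) j (Q j) := by
        funext k
        by_cases hk : k = j
        · subst hk; simp
        · simp [hk]
      rw [e]
      by_cases hji : j = i
      · subst hji
        have : Function.update (fun k => if k ∈ A then Q k else R k) j (Q j) =
            (fun k => if k ∈ A then Q k else R k) := by
          rw [Function.update_eq_self_iff]; simp [hj, hi]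
        rw [this, ih]
      · rw [step_update hF hsp _ i x y _ j hji (Q j) _, ih]
        · by_cases hA : i ∈ A <;> simp [hA, hi, hxy]
        · simp only [hj, if_false]; exact h j
  simpa using key univ

lemma diff_eq {n m : ℕ} {F : Profile n m → Fin m → ℝ} (hF : IsSDS F) (hsp : Strategyproof F)
    (han : Anonymous F) (hneu : Neutral F)
    (R : Profile n m) (i : Fin n) (x y : Fin m) (hxy : (R i x).val + 1 = (R i y).val) (k : ℕ)
    (hk : suppSize R x y = k + 1) :
    F R x - F (swapTop R i x y) x = Dl F (R i x) (R i y) k := by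
  set a := R i x with ha
  set b := R i y with hb
  have hab : a < b := by rw [Fin.lt_def]; omega
  have e1 : F R x = F (relabel (R i) R) a := (hneu (R i) R x).symm
  have e2 : F (swapTop R i x y) x = F (swapTop (relabel (R i) R) i a b) a := by
    rw [← hneu (R i)]
    congr 1
    funext j
    by_cases hj : j = i
    · subst hj
      ext z
      simp [relabel, swapTop, ha, hb]
    · simp [relabel, swapTop, hj]
  set T := univ.filter (fun j => R j x < R j y) with hT
  have hiT : i ∈ T := by simp [hT]; exact hab
  have e3 := step_all hF hsp (relabel (R i) R) (Qp n a b T) i a b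
    (by simpa [relabel] using hxy) (by simp [Qp, hiT, relabel]; rfl) (by
      intro j
      by_cases hj : R j x < R j y
      · have hj' : j ∈ T := by simp [hT, hj]
        simp [relabel, Qp, hj', ha, hb]
        simp [hj]; exact hab
      · have hj' : j ∉ T := by simpa [hT] using hj
        simp only [relabel, Qp, hj', if_false, Equiv.trans_apply, ha, hb,
          Equiv.symm_apply_apply, Equiv.swap_apply_left, Equiv.swap_apply_right]
        exact ⟨fun e => absurd e hj, fun e => absurd e (not_lt.2 hab.le)⟩)
  have e4 : swapTop (Qp n a b T) i a b = Qp n a b (T.erase i) := by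
    funext j
    by_cases hj : j = i
    · subst hj
      simp [swapTop, Qp, hiT]
      ext z; simp
    · simp [swapTop, Qp, hj]
  rw [e1, e2, ← e3, e4, Qp_Hc han, Qp_Hc han, card_erase_of_mem hiT]
  have : T.card = k + 1 := hk
  rw [this]; rfl

lemma hexa {n m : ℕ} {F : Profile n m → Fin m → ℝ} (hF : IsSDS F) (hsp : Strategyproof F)
    (han : Anonymous F) (hneu : Neutral F) (a b c : Fin m) (hab : a.val + 1 = b.val)
    (hbc : b.val + 1 = c.val) (k l : ℕ) (hkl : k ≤ l) (hl : l < n) :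
    Dl F a b k + Dl F b c l = Dl F b c k + Dl F a b l := by
  have nab : a ≠ b := by rintro rfl; omega
  have nbc : b ≠ c := by rintro rfl; omega
  have nac : a ≠ c := by rintro rfl; omega
  have n0 : 0 < n := by omega
  set i : Fin n := ⟨0, n0⟩ with hi
  set P : Equiv.Perm (Fin m) → Profile n m := fun r j =>
    if j.val = 0 then r else if j.val ≤ k then 1 else if j.val ≤ l then Equiv.swap a b
      else (Equiv.swap a b).trans (Equiv.swap b c) with hP
  have hPi : ∀ r, P r i = r := by intro r; simp [hP, hi]
  have hsw : ∀ r x y, swapTop (P r) i x y = P (r.trans (Equiv.swap (r x) (r y))) := by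
    intro r x y
    funext j
    by_cases hj : j = i
    · subst hj; rw [swapTop_same, hPi, hPi]
    · rw [swapTop_ne _ _ _ _ _ hj]
      have : j.val ≠ 0 := fun e => hj (Fin.ext e)
      simp [hP, this]
  have hsab : ∀ r : Equiv.Perm (Fin m), r a < r b → suppSize (P r) a b = k + 1 := by
    intro r hr
    unfold suppSize
    have : univ.filter (fun j => P r j a < P r j b) = univ.filter (fun j => j.val < k + 1) := by
      ext j
      simp only [mem_filter, mem_univ, true_and, hP]
      split_ifs with h1 h2 h3
      · simp [h1, hr]
      · simp only [Equiv.Perm.one_apply, Fin.lt_def]; omega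
      · simp only [Equiv.swap_apply_left, Equiv.swap_apply_right, Fin.lt_def]; omega
      · simp only [Equiv.trans_apply, Equiv.swap_apply_left, Equiv.swap_apply_right,
          Equiv.swap_apply_of_ne_of_ne nab nac, Fin.lt_def]; omega
    rw [this, Fin.card_filter_val_lt]; omega
  have hsac : ∀ r : Equiv.Perm (Fin m), r a < r c → suppSize (P r) a c = l + 1 := by
    intro r hr
    unfold suppSize
    have : univ.filter (fun j => P r j a < P r j c) = univ.filter (fun j => j.val < l + 1) := by
      ext j
      simp only [mem_filter, mem_univ, true_and, hP]
      split_ifs with h1 h2 h3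
      · simp [h1, hr]
      · simp only [Equiv.Perm.one_apply, Fin.lt_def]; omega
      · simp only [Equiv.swap_apply_left, Equiv.swap_apply_of_ne_of_ne nac.symm nbc.symm,
          Fin.lt_def]; omega
      · simp only [Equiv.trans_apply, Equiv.swap_apply_left,
          Equiv.swap_apply_of_ne_of_ne nac.symm nbc.symm, Equiv.swap_apply_right,
          Fin.lt_def]; omega
    rw [this, Fin.card_filter_val_lt]; omega
  have hd : ∀ (r : Equiv.Perm (Fin m)) (x y p q : Fin m) (t : ℕ), r x = p → r y = q →
      p.val + 1 = q.val → suppSize (P r) x y = t + 1 →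
      F (P r) x - F (P (r.trans (Equiv.swap p q))) x = Dl F p q t := by
    intro r x y p q t hx hy hpq ht
    have := diff_eq hF hsp han hneu (P r) i x y (by rw [hPi, hx, hy]; exact hpq) t ht
    rw [hsw, hPi, hx, hy] at this
    exact this
  have hloc : ∀ (r : Equiv.Perm (Fin m)) (x y z p q : Fin m), r x = p → r y = q →
      p.val + 1 = q.val → z ≠ x → z ≠ y →
      F (P (r.trans (Equiv.swap p q))) z = F (P r) z := by
    intro r x y z p q hx hy hpq h1 h2
    have := (localized hF hsp (P r) i x y (by rw [hPi, hx, hy]; exact hpq)).1 z h1 h2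
    rw [hsw, hx, hy] at this
    exact this
  have sc : Equiv.swap a b c = c := Equiv.swap_apply_of_ne_of_ne nac.symm nbc.symm
  have sa : Equiv.swap b c a = a := Equiv.swap_apply_of_ne_of_ne nab nac
  have lab : a < b := by rw [Fin.lt_def]; omega
  have lbc : b < c := by rw [Fin.lt_def]; omega
  have d1 := hd 1 a b a b k rfl rfl hab (hsab 1 lab)
  have d2 := hd ((1 : Equiv.Perm (Fin m)).trans (Equiv.swap a b)) a c b c l (by simp) (by simp [sc])
    hbc (hsac _ (by simp [sc, lbc]))
  have d3 := hloc (((1 : Equiv.Perm (Fin m)).trans (Equiv.swap a b)).trans (Equiv.swap b c))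
    b c a a b (by simp [sa]) (by simp [sc]) hab nab nac
  have d4 := hloc 1 b c a b c rfl rfl hbc nab nac
  have d5 := hd ((1 : Equiv.Perm (Fin m)).trans (Equiv.swap b c)) a c a b l (by simp [sa]) (by simp)
    hab (hsac _ (by simp [sa, lab]))
  have d6 := hd (((1 : Equiv.Perm (Fin m)).trans (Equiv.swap b c)).trans (Equiv.swap a b))
    a b b c k (by simp [sa]) (by simp [sc]) hbc (hsab _ (by simp [sa, sc, lbc]))
  have hbr : (((1 : Equiv.Perm (Fin m)).trans (Equiv.swap b c)).trans (Equiv.swap a b)).trans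
      (Equiv.swap b c) = (((1 : Equiv.Perm (Fin m)).trans (Equiv.swap a b)).trans
      (Equiv.swap b c)).trans (Equiv.swap a b) := by
    ext z
    simp only [Equiv.trans_apply, Equiv.Perm.one_apply]
    by_cases h1 : z = a
    · rw [h1]; simp [sa, sc]
    · by_cases h2 : z = b
      · rw [h2]; simp [sa, sc]
      · by_cases h3 : z = c
        · rw [h3]; simp [sa, sc]
        · simp [Equiv.swap_apply_of_ne_of_ne, h1, h2, h3]
  rw [hbr] at d6
  linarith

lemma indep {n m : ℕ} {F : Profile n m → Fin m → ℝ} (hF : IsSDS F) (hsp : Strategyproof F)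
    (han : Anonymous F) (hneu : Neutral F) (a0 b0 : Fin m) (h0 : a0.val = 0) (h1 : b0.val = 1)
    (p : ℕ) : ∀ (a b : Fin m), a.val = p → a.val + 1 = b.val → ∀ k l, k < n → l < n →
    Dl F a b k - Dl F a0 b0 k = Dl F a b l - Dl F a0 b0 l := by
  induction p with
  | zero =>
    intro a b ha hab k l _ _
    have e1 : a = a0 := Fin.ext (by omega)
    have e2 : b = b0 := Fin.ext (by omega)
    subst e1 e2; ring
  | succ p ih =>
    intro b c hb hbc k l hk hl
    have hp : p < m := by have := b.isLt; omega
    have := ih ⟨p, hp⟩ b rfl (by simp [hb]) k l hk hl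
    have hx : Dl F ⟨p, hp⟩ b k + Dl F b c l = Dl F b c k + Dl F ⟨p, hp⟩ b l := by
      rcases le_total k l with h | h
      · exact hexa hF hsp han hneu _ _ _ (by simp [hb]) hbc k l h hl
      · have := hexa hF hsp han hneu ⟨p, hp⟩ b c (by simp [hb]) hbc l k h hk
        linarith
    linarith

lemma tele {n m : ℕ} {F : Profile n m → Fin m → ℝ} (hneu : Neutral F) (a b : Fin m) :
    ∑ k ∈ Finset.range n, Dl F a b k = F (fun _ => 1) a - F (fun _ => 1) b := by
  unfold Dl
  rw [Finset.sum_range_sub]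
  congr 1
  · unfold Hc; congr 1; funext j; simp [Qp]
  · unfold Hc
    rw [← hneu (Equiv.swap a b) _ b, Equiv.swap_apply_right]
    congr 1; funext j; simp [Qp, relabel]; rfl

lemma Dl_nonneg {n m : ℕ} {F : Profile n m → Fin m → ℝ} (hF : IsSDS F) (hsp : Strategyproof F)
    (han : Anonymous F) (hneu : Neutral F) (a b : Fin m) (hab : a.val + 1 = b.val) (k : ℕ)
    (hk : k < n) : 0 ≤ Dl F a b k := by
  set T : Finset (Fin n) := univ.filter (fun j => j.val < k + 1) with hT
  have hi : (⟨k, hk⟩ : Fin n) ∈ T := by simp [hT]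
  have e : Qp n a b T ⟨k, hk⟩ = 1 := by simp [Qp, hi]
  have hab' : (Qp n a b T ⟨k, hk⟩ a).val + 1 = (Qp n a b T ⟨k, hk⟩ b).val := by
    rw [e]; exact hab
  have hs : suppSize (Qp n a b T) a b = k + 1 := by
    have : univ.filter (fun j => Qp n a b T j a < Qp n a b T j b) = T := by
      ext j
      by_cases hj : j ∈ T
      · have : a < b := by rw [Fin.lt_def]; omega
        rw [mem_filter]
        simp only [Qp, hj, mem_univ, true_and, if_true, iff_true]; exact this
      · have : a ≤ b := by rw [Fin.le_def]; omega
        rw [mem_filter]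
        simp only [Qp, hj, mem_univ, true_and, if_false, iff_false, Equiv.swap_apply_left, Equiv.swap_apply_right, not_lt]; exact this
    unfold suppSize
    rw [this, hT, Fin.card_filter_val_lt]; omega
  have h1 := diff_eq hF hsp han hneu _ _ a b hab' k hs
  have h2 := (localized hF hsp _ _ a b hab').2.1
  rw [e] at h1
  simp only [Equiv.Perm.one_apply] at h1
  linarith

lemma diff_ex {n m : ℕ} {F : Profile n m → Fin m → ℝ} (hF : IsSDS F) (hsp : Strategyproof F)
    (han : Anonymous F) (hneu : Neutral F)
    (R : Profile n m) (i : Fin n) (x y : Fin m) (hxy : (R i x).val + 1 = (R i y).val) :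
    ∃ k, k < n ∧ F R x - F (swapTop R i x y) x = Dl F (R i x) (R i y) k := by
  have hpos : 0 < suppSize R x y := by
    apply Finset.card_pos.2
    exact ⟨i, by rw [mem_filter, Fin.lt_def]; exact ⟨mem_univ _, by omega⟩⟩
  have hle : suppSize R x y ≤ n := by
    have := Finset.card_le_univ (univ.filter (fun i => R i x < R i y))
    simpa [suppSize] using this
  exact ⟨suppSize R x y - 1, by omega, diff_eq hF hsp han hneu R i x y hxy _ (by omega)⟩

lemma dictProb_eq {n m : ℕ} (R : Profile n m) (i : Fin n) (x : Fin m) :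
    dictProb R i x = if (R i x).val = 0 then 1 else 0 := by
  unfold dictProb
  congr 1
  apply propext
  constructor
  · intro h
    have := h ((R i).symm ⟨0, by have := x.isLt; omega⟩)
    simp [Fin.le_def] at this
    exact this
  · intro h y
    rw [Fin.le_def]; omega

lemma top_mass {n m : ℕ} {F : Profile n m → Fin m → ℝ} (hF : IsSDS F) (b0 : Fin m)
    (h1 : b0.val = 1) (δ : ℝ)
    (hδ : ∀ (R : Profile n m) (i : Fin n) (x y : Fin m), (R i x).val = 0 → (R i y).val = 1 →
      δ ≤ F R x - F (swapTop R i x y) x) (x : Fin m) (A : Finset (Fin n)) :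
    ∀ R : Profile n m, (∀ i ∈ A, (R i x).val = 0) → δ * A.card ≤ F R x := by
  induction A using Finset.induction_on with
  | empty => intro R _; simpa using hF.1 R x
  | insert i A hi ih =>
    intro R hR
    have e1 := hδ R i x ((R i).symm b0) (hR i (by simp)) (by simpa using h1)
    have e2 := ih (swapTop R i x ((R i).symm b0)) (by
      intro j hj
      rw [swapTop_ne _ _ _ _ _ (by rintro rfl; exact hi hj)]
      exact hR j (by simp [hj]))
    rw [card_insert_of_notMem hi]
    push_cast
    linarith

lemma sp_gap {n m : ℕ} {F : Profile n m → Fin m → ℝ} (hF : IsSDS F) (hsp : Strategyproof F)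
    (a0 b0 : Fin m) (h0 : a0.val = 0) (h1 : b0.val = 1) (δ : ℝ)
    (hδ : ∀ (R : Profile n m) (i : Fin n) (x y : Fin m), (R i x).val = 0 → (R i y).val = 1 →
      δ ≤ F R x - F (swapTop R i x y) x) (R R' : Profile n m) (i : Fin n)
    (h : ∀ j, j ≠ i → R j = R' j) (r : ℕ) (hr : 0 < r) (t : Fin m) (ht : (R' i t).val = 0)
    (htr : r ≤ (R i t).val) :
    ∑ z ∈ univ.filter (fun z => (R i z).val < r), F R' z + δ ≤
      ∑ z ∈ univ.filter (fun z => (R i z).val < r), F R z := by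
  set U := univ.filter (fun z => (R i z).val < r) with hU
  set u := (R i).symm a0 with hu
  have hRu : (R i u).val = 0 := by simp [hu, h0]
  have hut : u ≠ t := by rintro e; rw [e] at hRu; omega
  have huU : u ∈ U := by simp [hU]; omega
  have htU : t ∉ U := by simp [hU]; omega
  set S2 : Profile n m := Function.update R i ((R i).trans (Fin.cycleRange (R i t))) with hS2
  have hS2i : ∀ z, S2 i z = Fin.cycleRange (R i t) (R i z) := by intro z; simp [hS2]
  have hS2j : ∀ j, j ≠ i → S2 j = R j := by intro j hj; simp [hS2, hj]
  have hS2t : (S2 i t).val = 0 := by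
    rw [hS2i]
    have : NeZero m := ⟨by have := t.isLt; omega⟩
    rw [Fin.cycleRange_self]; simp
  have hS2lt : ∀ z, (R i z).val < (R i t).val → (S2 i z).val = (R i z).val + 1 := by
    intro z hz; rw [hS2i]; exact Fin.coe_cycleRange_of_lt hz
  have hS2gt : ∀ z, (R i t).val < (R i z).val → (S2 i z).val = (R i z).val := by
    intro z hz; rw [hS2i, Fin.cycleRange_of_gt hz]
  have hS2u : (S2 i u).val = 1 := by rw [hS2lt u (by omega)]; omega
  set S1 := swapTop S2 i t u with hS1
  have hgap := hδ S2 i t u hS2t hS2u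
  have hl := localized hF hsp S2 i t u (by omega)
  rw [← hS1] at hgap hl
  have c1 : ∑ z ∈ U, F S1 z ≤ ∑ z ∈ U, F R z :=
    sp_prefix hF hsp R S1 i (fun j hj => by rw [hS1, swapTop_ne _ _ _ _ _ hj, hS2j j hj]) r
  have c2 : ∑ z ∈ U, F S2 z + δ ≤ ∑ z ∈ U, F S1 z := by
    rw [← Finset.add_sum_erase U _ huU, ← Finset.add_sum_erase U _ huU]
    have : ∑ z ∈ U.erase u, F S1 z = ∑ z ∈ U.erase u, F S2 z := by
      apply Finset.sum_congr rfl
      intro z hz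
      rw [mem_erase] at hz
      exact hl.1 z (by rintro rfl; exact htU hz.2) hz.1
    rw [this]; linarith [hl.2.2]
  have hpre : univ.filter (fun z => (S2 i z).val < r + 1) = insert t U := by
    ext z
    simp only [mem_filter, mem_univ, true_and, mem_insert, hU]
    rcases lt_trichotomy (R i z).val (R i t).val with hz | hz | hz
    · rw [hS2lt z hz]
      have : z ≠ t := by rintro rfl; omega
      simp [this]
    · have : z = t := (R i).injective (Fin.ext hz)
      subst this; simp [hS2t]
    · rw [hS2gt z hz]
      have : z ≠ t := by rintro rfl; omega
      simp only [this, false_or]; omega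
  have c3 := sp_prefix hF hsp S2 R' i (fun j hj => by rw [hS2j j hj, h j hj]) (r + 1)
  rw [hpre, sum_insert htU, sum_insert htU] at c3
  have c4 := sp_prefix hF hsp R' S2 i (fun j hj => by rw [hS2j j hj, h j hj]) (0 + 1)
  rw [← ht, prefix_succ, prefix_succ, ht] at c4
  simp at c4
  linarith

lemma decomp {n m : ℕ} (hn : 1 ≤ n) {F : Profile n m → Fin m → ℝ} (hF : IsSDS F)
    (hsp : Strategyproof F)
    (a0 b0 : Fin m) (h0 : a0.val = 0) (h1 : b0.val = 1) (δ : ℝ) (hδ0 : 0 ≤ δ)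
    (hδ : ∀ (R : Profile n m) (i : Fin n) (x y : Fin m), (R i x).val = 0 → (R i y).val = 1 →
      δ ≤ F R x - F (swapTop R i x y) x) (hδ1 : n * δ < 1) : DecomposesAt F (n * δ) := by
  have hn' : (n : ℝ) ≠ 0 := by positivity
  have hpos : 0 < 1 - n * δ := by linarith
  have htop : ∀ (R : Profile n m) (i : Fin n), ∑ x, dictProb R i x = 1 := by
    intro R i
    rw [Finset.sum_eq_single ((R i).symm a0)]
    · rw [dictProb_eq]; simp [h0]
    · intro b _ hb
      rw [dictProb_eq, if_neg]
      intro e; apply hb; rw [Equiv.eq_symm_apply]; exact Fin.ext (by omega)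
    · simp
  have hdn : ∀ (R : Profile n m) (i : Fin n) x, 0 ≤ dictProb R i x := by
    intro R i x; unfold dictProb; split_ifs <;> norm_num
  refine ⟨uniformRD n m, fun R x => (F R x - δ * ∑ i, dictProb R i x) / (1 - n * δ),
    ⟨fun _ => 1 / n, fun _ => by positivity, by simp [hn'], fun R x => by
      rw [uniformRD, Finset.mul_sum]⟩, ⟨?_, ?_⟩, ?_, ?_⟩
  · intro R x
    apply div_nonneg _ hpos.le
    have := top_mass hF b0 h1 δ hδ x (univ.filter (fun i => (R i x).val = 0)) R (by simp)
    have e : ∑ i, dictProb R i x = ((univ.filter (fun i => (R i x).val = 0)).card : ℝ) := by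
      simp [dictProb_eq]
    rw [e]; linarith
  · intro R
    rw [← Finset.sum_div, Finset.sum_sub_distrib, ← Finset.mul_sum, Finset.sum_comm, hF.2]
    simp only [htop]
    rw [div_eq_one_iff_eq hpos.ne']
    simp; ring
  · intro R R' i h x
    rw [← Finset.sum_div, ← Finset.sum_div]
    apply div_le_div_of_nonneg_right _ hpos.le
    set U := univ.filter (fun y => R i y < R i x) with hU
    rw [Finset.sum_sub_distrib, Finset.sum_sub_distrib, ← Finset.mul_sum, ← Finset.mul_sum]
    rw [Finset.sum_comm (s := U), Finset.sum_comm (s := U)]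
    rw [← Finset.add_sum_erase univ _ (mem_univ i), ← Finset.add_sum_erase univ _ (mem_univ i)]
    have hsame : ∑ j ∈ univ.erase i, ∑ z ∈ U, dictProb R' j z =
        ∑ j ∈ univ.erase i, ∑ z ∈ U, dictProb R j z := by
      apply Finset.sum_congr rfl
      intro j hj
      apply Finset.sum_congr rfl
      intro z _
      unfold dictProb; rw [h j (by simpa using hj)]
    rw [hsame]
    have hle1 : ∑ z ∈ U, dictProb R i z ≤ 1 := by
      rw [← htop R i]
      exact Finset.sum_le_sum_of_subset_of_nonneg (subset_univ _) (fun z _ _ => hdn R i z)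
    have hge0 : 0 ≤ ∑ z ∈ U, dictProb R' i z := Finset.sum_nonneg (fun z _ => hdn R' i z)
    set t := (R' i).symm a0 with ht
    have htop' : (R' i t).val = 0 := by simp [ht, h0]
    have hspU := hsp R R' i h x
    rw [← hU] at hspU
    by_cases htU : t ∈ U
    · have : 1 ≤ ∑ z ∈ U, dictProb R' i z := by
        have e : dictProb R' i t = 1 := by rw [dictProb_eq, if_pos htop']
        rw [← e]
        exact Finset.single_le_sum (f := fun z => dictProb R' i z) (fun z _ => hdn R' i z) htU
      nlinarith
    · by_cases hx : (R i x).val = 0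
      · have : U = ∅ := by
          ext z; simp [hU, Fin.le_def, hx]
        rw [this]; simp
      · have := sp_gap hF hsp a0 b0 h0 h1 δ hδ R R' i h (R i x).val (by omega) t htop'
          (by simpa [hU] using htU)
        have hU' : univ.filter (fun z => (R i z).val < (R i x).val) = U := by
          ext z; simp [hU]
        rw [hU'] at this
        nlinarith
  · intro R x
    rw [mul_div_cancel₀ _ hpos.ne', uniformRD]
    field_simp
    ring

/-- For `m ≥ 4` and `ε ∈ [0,1]`, every strategyproof, anonymous,
neutral, `(1-ε)/m`-ex post efficient and exactly `ε`-randomly dictatorial SDS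
is a convex combination of the uniform random dictatorship and the uniform
lottery. -/
theorem mixture_of_uniformRD_and_uniformLottery (n m : ℕ) (hn : 1 ≤ n)
    (hm : 4 ≤ m) (ε : ℝ) (hε0 : 0 ≤ ε) (hε1 : ε ≤ 1)
    (F : Profile n m → Fin m → ℝ) (hF : IsSDS F) (hsp : Strategyproof F)
    (han : Anonymous F) (hneu : Neutral F)
    (heff : ExPostEff F ((1 - ε) / (m : ℝ))) (hrd : RandDictDegree F ε) :
    ∃ lam : ℝ, 0 ≤ lam ∧ lam ≤ 1 ∧
      ∀ R x, F R x = lam * uniformRD n m R x + (1 - lam) * uniformLottery n m R x := by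
  have hm0 : (0 : ℝ) < m := by have : 0 < m := by omega
                               exact_mod_cast this
  have hn0 : (0 : ℝ) < n := by have : 0 < n := by omega
                               exact_mod_cast this
  set e0 : Fin m := ⟨0, by omega⟩ with he0
  set e1 : Fin m := ⟨1, by omega⟩ with he1
  set e2 : Fin m := ⟨2, by omega⟩ with he2
  set e3 : Fin m := ⟨3, by omega⟩ with he3
  obtain ⟨k0, hk0, hmin⟩ := Finset.exists_min_image (Finset.range n) (Dl F e0 e1)
    ⟨0, by simp; omega⟩
  rw [Finset.mem_range] at hk0
  set δ := Dl F e0 e1 k0 with hδdef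
  have hδ0 : 0 ≤ δ := Dl_nonneg hF hsp han hneu e0 e1 rfl k0 hk0
  set B := ∑ k ∈ Finset.range n, (Dl F e0 e1 k - δ) with hB
  have hB0 : 0 ≤ B := Finset.sum_nonneg fun k hk => by linarith [hmin k hk]
  set h : Fin m → ℝ := F (fun _ => 1) with hh
  have hdiff : ∀ a b : Fin m, a.val + 1 = b.val → h a - h b = B + n * Dl F a b k0 := by
    intro a b hab
    rw [hh, ← tele hneu a b, hB]
    have : ∀ k ∈ Finset.range n, Dl F a b k = (Dl F e0 e1 k - δ) + Dl F a b k0 := by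
      intro k hk
      have := indep hF hsp han hneu e0 e1 rfl rfl a.val a b rfl hab k k0
        (Finset.mem_range.1 hk) hk0
      linarith
    rw [Finset.sum_congr rfl this, Finset.sum_add_distrib]
    simp
  have hle : ∀ a b : Fin m, a.val + 1 = b.val → h b ≤ h a - B := by
    intro a b hab
    have h1 := hdiff a b hab
    have h2 := mul_nonneg hn0.le (Dl_nonneg hF hsp han hneu a b hab k0 hk0)
    linarith
  have hδtop : ∀ (R : Profile n m) (i : Fin n) (x y : Fin m), (R i x).val = 0 →
      (R i y).val = 1 → δ ≤ F R x - F (swapTop R i x y) x := by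
    intro R i x y hx hy
    obtain ⟨k, hk, e⟩ := diff_ex hF hsp han hneu R i x y (by omega)
    have ex : R i x = e0 := Fin.ext hx
    have ey : R i y = e1 := Fin.ext hy
    rw [e, ex, ey]
    exact hmin k (Finset.mem_range.2 hk)
  have h01 : h e0 - h e1 = B + n * δ := hdiff e0 e1 rfl
  have hnn : ∀ q, 0 ≤ h q := fun q => hF.1 _ q
  have hsum : ∑ q, h q = 1 := hF.2 _
  have hγ1 : n * δ ≤ 1 := by
    have : h e0 ≤ 1 := by
      rw [← hsum]; exact Finset.single_le_sum (fun q _ => hnn q) (mem_univ e0)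
    linarith [hnn e1]
  have hγε : n * δ ≤ ε := by
    by_contra hcon
    push Not at hcon
    set δ' := ((ε + n * δ) / 2) / n with hδ'
    have e : n * δ' = (ε + n * δ) / 2 := by rw [hδ']; field_simp
    have hδ'0 : 0 ≤ δ' := by positivity
    have hδ'le : δ' ≤ δ := by
      have : n * δ' ≤ n * δ := by linarith
      exact le_of_mul_le_mul_left this hn0
    have hdec := decomp hn hF hsp e0 e1 rfl rfl δ' hδ'0
      (fun R i x y hx hy => hδ'le.trans (hδtop R i x y hx hy)) (by linarith)
    have := hrd.2.2.2 _ (by positivity) (by linarith) hdec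
    linarith
  have hh1 : h e1 ≤ (1 - ε) / m := heff _ _ ⟨e0, fun i => by
    simp [he0, he1]⟩
  have hh1' : m * h e1 ≤ 1 - ε := by
    rw [le_div_iff₀ hm0] at hh1; linarith
  have hmono : ∀ (q : ℕ) (x : Fin m), x.val = q + 1 → h x ≤ h e1 := by
    intro q
    induction q with
    | zero => intro x hx; rw [show x = e1 from Fin.ext hx]
    | succ q ih =>
      intro x hx
      have hq : q + 1 < m := by have := x.isLt; omega
      have := ih ⟨q + 1, hq⟩ rfl
      have := hle ⟨q + 1, hq⟩ x (by simp [hx])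
      linarith
  have h2 := hle e1 e2 rfl
  have h3 := hle e2 e3 rfl
  have n01 : e1 ≠ e0 := by simp [he0, he1]
  set f : Fin m → ℝ := fun q => h e1 + (if q = e0 then n * δ + B else 0)
    - (if q = e2 then B else 0) - (if q = e3 then 2 * B else 0) - h q with hf
  have hf0 : ∀ q, 0 ≤ f q := by
    intro q
    simp only [hf]
    by_cases q0 : q = e0
    · rw [q0]; simp [he0, he2, he3]; simp only [← he0]; linarith
    · by_cases q2 : q = e2
      · rw [q2]; simp [he0, he2, he3]; simp only [← he2]; linarith
      · by_cases q3 : q = e3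
        · rw [q3]; simp [he0, he2, he3]; simp only [← he3]; linarith
        · have : q.val ≠ 0 := fun e => q0 (Fin.ext e)
          have := hmono (q.val - 1) q (by omega)
          simp [q0, q2, q3, this]
  have hfs : ∑ q, f q = m * h e1 + (n * δ + B) - B - 2 * B - 1 := by
    simp only [hf, Finset.sum_sub_distrib, Finset.sum_add_distrib, hsum]
    simp
  have hfs0 : 0 ≤ ∑ q, f q := Finset.sum_nonneg fun q _ => hf0 q
  have hBz : B = 0 := by linarith
  have hfz : ∑ q, f q = 0 := by linarith
  have hfq : ∀ q, f q = 0 := fun q =>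
    (Finset.sum_eq_zero_iff_of_nonneg fun q _ => hf0 q).1 hfz q (mem_univ q)
  have hq : ∀ q, h q = h e1 + if q = e0 then n * δ else 0 := by
    intro q
    have := hfq q
    simp only [hf, hBz] at this
    simp at this
    linarith
  have hh1v : m * h e1 = 1 - n * δ := by rw [hBz] at hfs; linarith
  have hD01 : ∀ k, k < n → Dl F e0 e1 k = δ := by
    intro k hk
    have := (Finset.sum_eq_zero_iff_of_nonneg fun k hk => by
      linarith [hmin k hk]).1 (hB.symm.trans hBz) k (Finset.mem_range.2 hk)
    linarith
  have hD : ∀ a b : Fin m, a.val + 1 = b.val → a ≠ e0 → ∀ k, k < n → Dl F a b k = 0 := by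
    intro a b hab ha k hk
    have e := hdiff a b hab
    have hb : b ≠ e0 := by intro e; rw [e, he0] at hab; simp at hab
    rw [hq a, hq b, if_neg ha, if_neg hb, hBz] at e
    have e' : Dl F a b k0 = 0 := by
      have : (n : ℝ) * Dl F a b k0 = 0 := by linarith
      rcases mul_eq_zero.1 this with h | h
      · linarith
      · exact h
    have := indep hF hsp han hneu e0 e1 rfl rfl a.val a b rfl hab k k0 hk hk0
    rw [hD01 k hk, e', hD01 k0 hk0] at this
    linarith
  set G : Profile n m → Fin m → ℝ := fun R x => F R x - δ * ∑ i, dictProb R i x with hG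
  have hGswap : ∀ (R : Profile n m) (i : Fin n) (x y : Fin m),
      (R i x).val + 1 = (R i y).val → G (swapTop R i x y) = G R := by
    intro R i x y hxy
    have hl := localized hF hsp R i x y hxy
    obtain ⟨k, hk, e⟩ := diff_ex hF hsp han hneu R i x y hxy
    funext z
    simp only [hG]
    rw [← Finset.add_sum_erase univ _ (mem_univ i), ← Finset.add_sum_erase univ _ (mem_univ i)]
    have hsame : ∑ j ∈ univ.erase i, dictProb (swapTop R i x y) j z =
        ∑ j ∈ univ.erase i, dictProb R j z := by
      apply Finset.sum_congr rfl
      intro j hj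
      unfold dictProb; rw [swapTop_ne _ _ _ _ _ (by simpa using hj)]
    rw [hsame, dictProb_eq, dictProb_eq, swapTop_same, Equiv.trans_apply]
    have hxyne : x ≠ y := by rintro rfl; omega
    by_cases hzx : z = x
    · rw [hzx, Equiv.swap_apply_left, if_neg (by omega : ¬ (R i y).val = 0)]
      by_cases hx0 : (R i x).val = 0
      · rw [if_pos hx0]
        rw [show R i x = e0 from Fin.ext hx0,
          show R i y = e1 from Fin.ext (by simp [he1]; omega), hD01 k hk] at e
        linarith
      · rw [if_neg hx0]
        rw [hD _ _ hxy (fun e => hx0 (by rw [e])) k hk] at e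
        linarith
    · by_cases hzy : z = y
      · rw [hzy, Equiv.swap_apply_right, if_neg (by omega : ¬ (R i y).val = 0)]
        by_cases hx0 : (R i x).val = 0
        · rw [if_pos hx0]
          rw [show R i x = e0 from Fin.ext hx0,
            show R i y = e1 from Fin.ext (by simp [he1]; omega), hD01 k hk] at e
          linarith [hl.2.2]
        · rw [if_neg hx0]
          rw [hD _ _ hxy (fun e => hx0 (by rw [e])) k hk] at e
          linarith [hl.2.2]
      · rw [hl.1 z hzx hzy, Equiv.swap_apply_of_ne_of_ne
          (fun e => hzx ((R i).injective e)) (fun e => hzy ((R i).injective e))]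
  have hGupd : ∀ (R : Profile n m) (i : Fin n) (r : Equiv.Perm (Fin m)),
      G (Function.update R i r) = G R := by
    intro R i r
    have := adj_const (fun r => G (Function.update R i r)) (by
      intro r a b hab
      have := hGswap (Function.update R i r) i (r.symm a) (r.symm b) (by simpa using hab)
      simpa [swapTop] using this) r (R i)
    simpa using this
  have hGconst : ∀ R : Profile n m, G R = G (fun _ => 1) := by
    intro R
    have key : ∀ A : Finset (Fin n), G (fun j => if j ∈ A then 1 else R j) = G R := by
      intro A
      induction A using Finset.induction_on with
      | empty => simp
      | insert j A hj ih =>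
        have e : (fun k => if k ∈ insert j A then 1 else R k) =
            Function.update (fun k => if k ∈ A then 1 else R k) j 1 := by
          funext k
          by_cases hk : k = j
          · subst hk; simp
          · simp [hk]
        rw [e, hGupd, ih]
    have := key univ
    simpa using this.symm
  refine ⟨n * δ, by positivity, hγ1, fun R x => ?_⟩
  have e := congrFun (hGconst R) x
  have e' : G (fun _ => 1) x = h e1 := by
    simp only [hG, dictProb_eq]
    have := hq x
    rw [hh] at this
    rw [this]
    by_cases hx : x = e0
    · rw [hx]; simp [he0]; ring
    · have : x.val ≠ 0 := fun e => hx (Fin.ext e)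
      simp [hx, this]
      rfl
  rw [e'] at e
  simp only [hG] at e
  have e5 : h e1 = (1 - n * δ) * (1 / m) := by field_simp; linarith
  rw [uniformRD, uniformLottery, ← e5]
  have e6 : n * δ * (1 / (n : ℝ) * ∑ i, dictProb R i x) = δ * ∑ i, dictProb R i x := by
    field_simp
  rw [e6]; linarith
end
end

section
/- Let m ≥ 4 and n ≥ 5. Every strategyproof SDS that is anonymous, neutral, α-Condorcet-consistent, and β-ex post efficient with β = ((m−2)/(m−1))·α is a convex combination of the uniform random dictatorship and the randomized Copeland rule. -/
open Finset

noncomputable section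

/-! Adjacent swaps. -/

theorem aux_swapTop_self {n m : ℕ} (R : Profile n m) (i : Fin n) (x y w : Fin m) :
    swapTop R i x y i w = Equiv.swap (R i x) (R i y) (R i w) := by
  simp [swapTop]

theorem aux_swapTop_ne {n m : ℕ} (R : Profile n m) (i j : Fin n) (x y : Fin m) (h : j ≠ i) :
    swapTop R i x y j = R j := by
  simp [swapTop, h]

theorem aux_swap_x {n m : ℕ} (R : Profile n m) (i : Fin n) (x y : Fin m) :
    swapTop R i x y i x = R i y := by
  simp [swapTop]

theorem aux_swap_y {n m : ℕ} (R : Profile n m) (i : Fin n) (x y : Fin m) :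
    swapTop R i x y i y = R i x := by
  simp [swapTop]

theorem aux_swap_z {n m : ℕ} (R : Profile n m) (i : Fin n) (x y z : Fin m) (hx : z ≠ x)
    (hy : z ≠ y) : swapTop R i x y i z = R i z := by
  rw [aux_swapTop_self, Equiv.swap_apply_of_ne_of_ne] <;> simpa using by assumption

theorem aux_swap_swap {n m : ℕ} (R : Profile n m) (i : Fin n) (x y : Fin m) :
    swapTop (swapTop R i x y) i y x = R := by
  funext j
  by_cases h : j = i
  · subst h
    ext w : 1
    rw [aux_swapTop_self, aux_swap_x, aux_swap_y, aux_swapTop_self, Equiv.swap_apply_self]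
  · rw [aux_swapTop_ne _ _ _ _ _ h, aux_swapTop_ne _ _ _ _ _ h]

theorem aux_swap_comm {n m : ℕ} (R : Profile n m) (i j : Fin n) (x y z w : Fin m) (h : j ≠ i) :
    swapTop (swapTop R j z w) i x y = swapTop (swapTop R i x y) j z w := by
  funext k
  by_cases hi : k = i
  · subst hi
    ext u : 1
    rw [aux_swapTop_self, aux_swapTop_ne _ _ _ _ _ h.symm, aux_swapTop_ne _ _ _ _ _ h.symm,
      aux_swapTop_self]
  · rw [aux_swapTop_ne _ _ _ _ _ hi]
    by_cases hj : k = j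
    · subst hj
      ext u : 1
      rw [aux_swapTop_self, aux_swapTop_self, aux_swapTop_ne _ _ _ _ _ h]
    · rw [aux_swapTop_ne _ _ _ _ _ hj, aux_swapTop_ne _ _ _ _ _ hj, aux_swapTop_ne _ _ _ _ _ hi]

/-- `x` is ranked directly above `y` by `i`. -/
def AdjAt {n m : ℕ} (R : Profile n m) (i : Fin n) (x y : Fin m) : Prop :=
  (R i y : ℕ) = (R i x : ℕ) + 1

theorem AdjAt.ne {n m : ℕ} {R : Profile n m} {i : Fin n} {x y : Fin m} (h : AdjAt R i x y) :
    x ≠ y := by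
  rintro rfl
  unfold AdjAt at h
  omega

theorem aux_filter_lt {n m : ℕ} (R : Profile n m) (i : Fin n) (p q : Fin m → ℝ)
    (hs : ∑ x, p x = ∑ x, q x) (h : SDPref R i p q) (t : ℕ) :
    ∑ y ∈ univ.filter (fun y => (R i y : ℕ) < t), q y ≤
      ∑ y ∈ univ.filter (fun y => (R i y : ℕ) < t), p y := by
  by_cases ht : t < m
  · have := h ((R i).symm ⟨t, ht⟩)
    simpa [Fin.lt_def] using this
  · have : (univ.filter (fun y => (R i y : ℕ) < t)) = univ := by
      ext y
      simp
      have := (R i y).2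
      omega
    rw [this, hs]

theorem aux_filter_succ {n m : ℕ} (R : Profile n m) (i : Fin n) (p : Fin m → ℝ) (x : Fin m) :
    ∑ y ∈ univ.filter (fun y => (R i y : ℕ) < (R i x : ℕ) + 1), p y =
      ∑ y ∈ univ.filter (fun y => (R i y : ℕ) < (R i x : ℕ)), p y + p x := by
  have : univ.filter (fun y => (R i y : ℕ) < (R i x : ℕ) + 1) =
      insert x (univ.filter (fun y => (R i y : ℕ) < (R i x : ℕ))) := by
    ext y
    simp only [mem_filter, mem_univ, true_and, mem_insert]
    rw [Nat.lt_succ_iff_lt_or_eq, or_comm]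
    simp [Fin.val_inj]
  rw [this, sum_insert (by simp), add_comm]

theorem aux_filter_swap {n m : ℕ} {R : Profile n m} {i : Fin n} {x y : Fin m}
    (h : AdjAt R i x y) (t : ℕ) (ht : t ≠ (R i x : ℕ) + 1) :
    univ.filter (fun z => (swapTop R i x y i z : ℕ) < t) =
      univ.filter (fun z => (R i z : ℕ) < t) := by
  ext z
  simp only [mem_filter, mem_univ, true_and]
  unfold AdjAt at h
  by_cases hx : z = x
  · subst hx; rw [aux_swap_x]; omega
  by_cases hy : z = y
  · subst hy; rw [aux_swap_y]; omega
  rw [aux_swap_z _ _ _ _ _ hx hy]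

theorem aux_sp_swap {n m : ℕ} {F : Profile n m → Fin m → ℝ} (hF : IsSDS F)
    (hsp : Strategyproof F) {R : Profile n m} {i : Fin n} {x y : Fin m} (h : AdjAt R i x y) :
    (∀ z, z ≠ x → z ≠ y → F (swapTop R i x y) z = F R z) ∧
    F (swapTop R i x y) x ≤ F R x ∧
    F (swapTop R i x y) y - F R y = F R x - F (swapTop R i x y) x := by
  set R' := swapTop R i x y with hR'
  have h1 := aux_filter_lt R i _ _ (by rw [hF.2, hF.2])
    (hsp R R' i (fun j hj => (aux_swapTop_ne _ _ _ _ _ hj).symm))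
  have h2 := aux_filter_lt R' i _ _ (by rw [hF.2, hF.2])
    (hsp R' R i (fun j hj => (aux_swapTop_ne _ _ _ _ _ hj)))
  have heq : ∀ t, t ≠ (R i x : ℕ) + 1 →
      ∑ y ∈ univ.filter (fun y => (R i y : ℕ) < t), F R' y =
      ∑ y ∈ univ.filter (fun y => (R i y : ℕ) < t), F R y := by
    intro t ht
    have a := h1 t
    have b := h2 t
    rw [hR', aux_filter_swap h t ht] at b
    exact le_antisymm a b
  have hz : ∀ z, z ≠ x → z ≠ y → F R' z = F R z := by
    intro z hx hy
    have e1 : (R i z : ℕ) ≠ R i x := by simpa [Fin.val_inj] using hx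
    have e2 : (R i z : ℕ) ≠ R i y := by simpa [Fin.val_inj] using hy
    unfold AdjAt at h
    have a := heq (R i z) (by omega)
    have b := heq (R i z + 1) (by omega)
    rw [aux_filter_succ, aux_filter_succ] at b
    linarith
  refine ⟨hz, ?_, ?_⟩
  · have a := heq (R i x) (by omega)
    have b := h1 (R i x + 1)
    rw [aux_filter_succ, aux_filter_succ] at b
    linarith
  · have hne := h.ne
    have s1 := hF.2 R
    have s2 := hF.2 R'
    have key : ∀ p : Fin m → ℝ, ∑ z, p z = p x + p y + ∑ z ∈ (univ.erase x).erase y, p z := by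
      intro p
      rw [← add_sum_erase univ p (mem_univ x), ← add_sum_erase (univ.erase x) p (a := y)]
      · ring
      · simp [hne.symm]
    rw [key] at s1 s2
    have : ∑ z ∈ (univ.erase x).erase y, F R' z = ∑ z ∈ (univ.erase x).erase y, F R z := by
      apply sum_congr rfl
      intro z hzz
      simp at hzz
      exact hz z hzz.2 hzz.1
    linarith

theorem aux_exists_inv {m : ℕ} (σ ρ : Equiv.Perm (Fin m)) (h : σ ≠ ρ) :
    ∃ x y, (σ y : ℕ) = (σ x : ℕ) + 1 ∧ ρ y < ρ x := by
  by_contra hcon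
  push Not at hcon
  apply h
  cases m with
  | zero => ext x; exact x.elim0
  | succ m =>
    have hm : StrictMono (fun r => ρ (σ.symm r)) := by
      rw [Fin.strictMono_iff_lt_succ]
      intro r
      have := hcon (σ.symm r.castSucc) (σ.symm r.succ) (by simp)
      refine lt_of_le_of_ne this ?_
      simp [Fin.ext_iff]
    have : (fun r => ρ (σ.symm r)) = id := by
      rw [← hm.range_inj strictMono_id, Set.range_id]
      exact (σ.symm.trans ρ).surjective.range_eq
    ext x
    have := congrFun this (σ x)
    simp at this
    rw [this]

theorem aux_induction {n m : ℕ} (T : Profile n m) (P : Profile n m → Prop) (h0 : P T)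
    (step : ∀ R i x y, AdjAt R i x y → T i y < T i x → P (swapTop R i x y) → P R) :
    ∀ R, P R := by
  have main : ∀ (N : ℕ) (R : Profile n m),
      (∑ j, ∑ a, ((R j a : ℤ) - (T j a : ℤ)) ^ 2) ≤ N → P R := by
    intro N
    induction N using Nat.strong_induction_on with
    | _ N ih =>
      intro R hR
      by_cases hRT : R = T
      · rw [hRT]; exact h0
      obtain ⟨i, hi⟩ : ∃ i, R i ≠ T i := by
        by_contra hc
        push Not at hc
        exact hRT (funext hc)
      obtain ⟨x, y, hxy, hT⟩ := aux_exists_inv _ _ hi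
      have hadj : AdjAt R i x y := hxy
      have hlt : (∑ j, ∑ a, ((swapTop R i x y j a : ℤ) - (T j a : ℤ)) ^ 2) <
          (∑ j, ∑ a, ((R j a : ℤ) - (T j a : ℤ)) ^ 2) := by
        apply sum_lt_sum
        · intro j _
          by_cases hj : j = i
          · subst hj
            have key : ∀ p : Fin m → ℤ, ∑ z, p z = p x + p y + ∑ z ∈ (univ.erase x).erase y, p z := by
              intro p
              rw [← add_sum_erase univ p (mem_univ x), ← add_sum_erase (univ.erase x) p (a := y)]
              · ring
              · simp [hadj.ne.symm]
            rw [key, key, aux_swap_x, aux_swap_y]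
            have : ∑ z ∈ (univ.erase x).erase y, ((swapTop R j x y j z : ℤ) - (T j z : ℤ)) ^ 2 =
                ∑ z ∈ (univ.erase x).erase y, ((R j z : ℤ) - (T j z : ℤ)) ^ 2 := by
              apply sum_congr rfl
              intro z hzz
              simp at hzz
              rw [aux_swap_z _ _ _ _ _ hzz.2 hzz.1]
            rw [this, hxy]
            have : (T j y : ℤ) < T j x := by exact_mod_cast hT
            push_cast
            nlinarith
          · rw [aux_swapTop_ne _ _ _ _ _ hj]
        · refine ⟨i, mem_univ _, ?_⟩
          have key : ∀ p : Fin m → ℤ, ∑ z, p z = p x + p y + ∑ z ∈ (univ.erase x).erase y, p z := by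
            intro p
            rw [← add_sum_erase univ p (mem_univ x), ← add_sum_erase (univ.erase x) p (a := y)]
            · ring
            · simp [hadj.ne.symm]
          rw [key, key, aux_swap_x, aux_swap_y]
          have : ∑ z ∈ (univ.erase x).erase y, ((swapTop R i x y i z : ℤ) - (T i z : ℤ)) ^ 2 =
              ∑ z ∈ (univ.erase x).erase y, ((R i z : ℤ) - (T i z : ℤ)) ^ 2 := by
            apply sum_congr rfl
            intro z hzz
            simp at hzz
            rw [aux_swap_z _ _ _ _ _ hzz.2 hzz.1]
          rw [this, hxy]
          have : (T i y : ℤ) < T i x := by exact_mod_cast hT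
          push_cast
          nlinarith
      have hpos : 0 ≤ (∑ j, ∑ a, ((swapTop R i x y j a : ℤ) - (T j a : ℤ)) ^ 2) := by positivity
      apply step R i x y hadj hT
      refine ih (N - 1) (by omega) _ (by omega)
  intro R
  have hpos : 0 ≤ (∑ j, ∑ a, ((R j a : ℤ) - (T j a : ℤ)) ^ 2) := by positivity
  exact main _ R (Int.toNat_of_nonneg hpos).ge

/-- If two profiles agree on voter `i` and everybody agrees on `x` vs `y`, the effect of
swapping is the same. -/
theorem aux_D_inv {n m : ℕ} {F : Profile n m → Fin m → ℝ} (hF : IsSDS F)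
    (hsp : Strategyproof F) (T : Profile n m) (i : Fin n) (x y : Fin m) (hT : AdjAt T i x y) :
    ∀ R, R i = T i → (∀ j, R j x < R j y ↔ T j x < T j y) →
      F R x - F (swapTop R i x y) x = F T x - F (swapTop T i x y) x := by
  apply aux_induction T
  · intros; rfl
  · intro R j z w hzw hinv ih hi hord
    have hne := hzw.ne
    have hlt : R j z < R j w := by unfold AdjAt at hzw; rw [Fin.lt_def]; omega
    have hji : j ≠ i := by
      rintro rfl
      rw [hi] at hlt
      exact absurd hlt (not_lt.2 hinv.le)
    have hxyR : AdjAt R i x y := by unfold AdjAt at *; rw [hi]; exact hT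
    have hxy := hT.ne
    have e1 : ¬ (x = z ∧ y = w) := by
      rintro ⟨rfl, rfl⟩
      exact absurd ((hord j).1 hlt) (not_lt.2 hinv.le)
    have e2 : ¬ (x = w ∧ y = z) := by
      rintro ⟨rfl, rfl⟩
      exact absurd ((hord j).2 hinv) (not_lt.2 hlt.le)
    rw [← ih (by rw [aux_swapTop_ne _ _ _ _ _ hji.symm, hi]) ?_]
    · have hzw' : AdjAt (swapTop R i x y) j z w := by
        unfold AdjAt at *; rw [aux_swapTop_ne _ _ _ _ _ hji]; exact hzw
      have hxy' : AdjAt (swapTop R j z w) i x y := by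
        unfold AdjAt at *; rw [aux_swapTop_ne _ _ _ _ _ hji.symm]; exact hxyR
      obtain ⟨s1, -, -⟩ := aux_sp_swap hF hsp hzw
      obtain ⟨s2, -, -⟩ := aux_sp_swap hF hsp hzw'
      obtain ⟨-, -, s3⟩ := aux_sp_swap hF hsp hxyR
      obtain ⟨-, -, s4⟩ := aux_sp_swap hF hsp hxy'
      by_cases hx : x = z ∨ x = w
      · have h1 : y ≠ z := by
          rintro rfl
          rcases hx with rfl | rfl
          · exact hxy rfl
          · exact e2 ⟨rfl, rfl⟩
        have h2 : y ≠ w := by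
          rintro rfl
          rcases hx with rfl | rfl
          · exact e1 ⟨rfl, rfl⟩
          · exact hxy rfl
        rw [← s3, ← s4, aux_swap_comm _ _ _ _ _ _ _ hji, s1 y h1 h2, s2 y h1 h2]
      · push Not at hx
        rw [aux_swap_comm _ _ _ _ _ _ _ hji, s1 x hx.1 hx.2, s2 x hx.1 hx.2]
    · intro k
      rw [← hord k]
      by_cases hk : k = j
      · subst hk
        unfold AdjAt at hzw
        have inj : ∀ a b, a ≠ b → (R k a : ℕ) ≠ R k b := by
          intro a b hab
          simpa [Fin.val_inj] using hab
        simp only [Fin.lt_def]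
        by_cases xz : x = z
        · subst xz
          have yw : y ≠ w := fun h => e1 ⟨rfl, h⟩
          rw [aux_swap_x, aux_swap_z _ _ _ _ _ hxy.symm yw]
          have := inj _ _ hxy
          have := inj _ _ yw
          omega
        by_cases xw : x = w
        · subst xw
          have yz : y ≠ z := fun h => e2 ⟨rfl, h⟩
          rw [aux_swap_y, aux_swap_z _ _ _ _ _ yz hxy.symm]
          have := inj _ _ hxy
          have := inj _ _ yz
          omega
        rw [aux_swap_z _ _ _ _ _ xz xw]
        have := inj _ _ xz
        have := inj _ _ xw
        by_cases yz : y = z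
        · subst yz; rw [aux_swap_x]; omega
        by_cases yw : y = w
        · subst yw; rw [aux_swap_y]; omega
        rw [aux_swap_z _ _ _ _ _ yz yw]
      · rw [aux_swapTop_ne _ _ _ _ _ hk]
theorem aux_swap_ord {n m : ℕ} {R : Profile n m} {i : Fin n} {z w : Fin m} (hzw : AdjAt R i z w)
    (x y : Fin m) (hxy : x ≠ y) (e1 : ¬ (x = z ∧ y = w)) (e2 : ¬ (x = w ∧ y = z)) (k : Fin n) :
    swapTop R i z w k x < swapTop R i z w k y ↔ R k x < R k y := by
  by_cases hk : k = i
  · subst hk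
    unfold AdjAt at hzw
    have inj : ∀ a b, a ≠ b → (R k a : ℕ) ≠ R k b := by
      intro a b hab
      simpa [Fin.val_inj] using hab
    simp only [Fin.lt_def]
    by_cases xz : x = z
    · subst xz
      have yw : y ≠ w := fun h => e1 ⟨rfl, h⟩
      rw [aux_swap_x, aux_swap_z _ _ _ _ _ hxy.symm yw]
      have := inj _ _ hxy
      have := inj _ _ yw
      omega
    by_cases xw : x = w
    · subst xw
      have yz : y ≠ z := fun h => e2 ⟨rfl, h⟩
      rw [aux_swap_y, aux_swap_z _ _ _ _ _ yz hxy.symm]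
      have := inj _ _ hxy
      have := inj _ _ yz
      omega
    rw [aux_swap_z _ _ _ _ _ xz xw]
    have := inj _ _ xz
    have := inj _ _ xw
    by_cases yz : y = z
    · subst yz; rw [aux_swap_x]; omega
    by_cases yw : y = w
    · subst yw; rw [aux_swap_y]; omega
    rw [aux_swap_z _ _ _ _ _ yz yw]
  · rw [aux_swapTop_ne _ _ _ _ _ hk]

theorem aux_supp_swap {n m : ℕ} {R : Profile n m} {i : Fin n} {z w : Fin m} (hzw : AdjAt R i z w)
    (x y : Fin m) (hxy : x ≠ y) (e1 : ¬ (x = z ∧ y = w)) (e2 : ¬ (x = w ∧ y = z)) :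
    suppSize (swapTop R i z w) x y = suppSize R x y := by
  unfold suppSize
  congr 1
  ext k
  simp only [mem_filter, mem_univ, true_and]
  exact aux_swap_ord hzw x y hxy e1 e2 k

theorem aux_supp_add {n m : ℕ} (R : Profile n m) (x y : Fin m) (hxy : x ≠ y) :
    suppSize R x y + suppSize R y x = n := by
  unfold suppSize
  have : (univ.filter (fun i => R i y < R i x)) = univ.filter (fun i => ¬ R i x < R i y) := by
    ext k
    simp only [mem_filter, mem_univ, true_and, not_lt]
    exact ⟨le_of_lt, fun h => lt_of_le_of_ne h (by simpa using hxy.symm)⟩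
  rw [this, card_filter_add_card_filter_not]
  simp

theorem aux_supp_swap_self {n m : ℕ} {R : Profile n m} {i : Fin n} {x y : Fin m}
    (h : AdjAt R i x y) : suppSize (swapTop R i x y) x y + 1 = suppSize R x y := by
  unfold suppSize
  have hi : R i x < R i y := by unfold AdjAt at h; rw [Fin.lt_def]; omega
  have : (univ.filter (fun j => R j x < R j y)) =
      insert i (univ.filter (fun j => swapTop R i x y j x < swapTop R i x y j y)) := by
    ext k
    simp only [mem_filter, mem_univ, true_and, mem_insert]
    by_cases hk : k = i
    · subst hk; simp [hi]
    · simp [hk, aux_swapTop_ne]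
  rw [this, card_insert_of_notMem]
  simp [aux_swap_x, aux_swap_y, hi.le]

theorem aux_swap_adj {n m : ℕ} {R : Profile n m} {i : Fin n} {x y : Fin m}
    (h : AdjAt R i x y) : AdjAt (swapTop R i x y) i y x := by
  unfold AdjAt at *
  rw [aux_swap_x, aux_swap_y, h]

theorem aux_D_eq {n m : ℕ} {F : Profile n m → Fin m → ℝ} (hF : IsSDS F)
    (hsp : Strategyproof F) (han : Anonymous F) (hneu : Neutral F)
    (R R2 : Profile n m) (i i2 : Fin n) (x y x2 y2 : Fin m) (h : AdjAt R i x y)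
    (h2 : AdjAt R2 i2 x2 y2) (hr : (R i x : ℕ) = R2 i2 x2)
    (hk : suppSize R x y = suppSize R2 x2 y2) :
    F R2 x2 - F (swapTop R2 i2 x2 y2) x2 = F R x - F (swapTop R i x y) x := by
  set τ : Equiv.Perm (Fin m) := (R2 i2).trans (R i).symm with hτ
  have hx : τ x2 = x := by
    rw [hτ, Equiv.trans_apply, Equiv.symm_apply_eq]
    exact Fin.ext hr.symm
  have hy : τ y2 = y := by
    rw [hτ, Equiv.trans_apply, Equiv.symm_apply_eq]
    apply Fin.ext
    unfold AdjAt at h h2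
    omega
  set R3 := relabel τ R2 with hR3
  have hR3i : R3 i2 = R i := by
    ext z : 1
    simp [hR3, relabel, hτ]
  have hR3τ : ∀ j z, R3 j (τ z) = R2 j z := by
    intro j z
    simp [hR3, relabel]
  have hsw : swapTop R3 i2 x y = relabel τ (swapTop R2 i2 x2 y2) := by
    funext j
    ext z : 1
    obtain ⟨z, rfl⟩ := τ.surjective z
    have : relabel τ (swapTop R2 i2 x2 y2) j (τ z) = swapTop R2 i2 x2 y2 j z := by
      simp [relabel]
    rw [this]
    by_cases hj : j = i2
    · subst hj
      rw [aux_swapTop_self, aux_swapTop_self, ← hx, ← hy, hR3τ, hR3τ, hR3τ]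
    · rw [aux_swapTop_ne _ _ _ _ _ hj, aux_swapTop_ne _ _ _ _ _ hj, hR3τ]
  have hsupp : suppSize R3 x y = suppSize R2 x2 y2 := by
    unfold suppSize
    rw [← hx, ← hy]
    simp only [hR3τ]
  have e1 : F R2 x2 = F R3 x := by rw [← hx, hR3, hneu]
  have e2 : F (swapTop R2 i2 x2 y2) x2 = F (swapTop R3 i2 x y) x := by
    rw [hsw, ← hneu τ, hx]
  rw [e1, e2]
  -- now the voters
  have hcard : (univ.filter (fun j => R j x < R j y)).card =
      (univ.filter (fun j => R3 j x < R3 j y)).card := by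
    rw [← hsupp] at hk
    exact hk
  obtain ⟨e, he⟩ := Equiv.Perm.exists_map_finset_eq _ _ hcard
  have he' : ∀ j, R3 (e j) x < R3 (e j) y ↔ R j x < R j y := by
    intro j
    have : e j ∈ (univ.filter (fun j => R3 j x < R3 j y)) ↔
        j ∈ (univ.filter (fun j => R j x < R j y)) := by
      rw [← he]
      simp
    simpa using this
  have hi : R i x < R i y := by unfold AdjAt at h; rw [Fin.lt_def]; omega
  have hi2 : R3 i2 x < R3 i2 y := by rw [hR3i]; exact hi
  have hei : R3 (e i) x < R3 (e i) y := (he' i).2 hi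
  set π : Equiv.Perm (Fin n) := e.trans (Equiv.swap (e i) i2) with hπ
  have hπi : π i = i2 := by simp [hπ]
  have hπ' : ∀ j, R3 (π j) x < R3 (π j) y ↔ R j x < R j y := by
    intro j
    rw [← he' j, hπ, Equiv.trans_apply]
    by_cases h1 : e j = e i
    · rw [h1, Equiv.swap_apply_left]; simp [hi2, hei]
    by_cases h2 : e j = i2
    · rw [h2, Equiv.swap_apply_right]; simp [hi2, hei]
    rw [Equiv.swap_apply_of_ne_of_ne h1 h2]
  have e3 : F R3 = F (fun j => R3 (π j)) := (han π R3).symm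
  have hsw2 : swapTop (fun j => R3 (π j)) i x y = fun j => swapTop R3 i2 x y (π j) := by
    funext j
    by_cases hj : j = i
    · subst hj
      ext z : 1
      rw [aux_swapTop_self, hπi, aux_swapTop_self]
    · rw [aux_swapTop_ne _ _ _ _ _ hj, aux_swapTop_ne]
      rw [← hπi]
      simpa using hj
  have e4 : F (swapTop R3 i2 x y) = F (swapTop (fun j => R3 (π j)) i x y) := by
    rw [hsw2, han π]
  rw [e3, e4]
  apply aux_D_inv hF hsp R i x y h
  · simp only [hπi, hR3i]
  · exact hπ'

theorem aux_card_lt {n k : ℕ} (hk : k ≤ n) :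
    (univ.filter (fun j : Fin n => (j : ℕ) < k)).card = k := by
  rw [Fin.card_filter_val_lt]; omega

theorem aux_exists_profile {n m : ℕ} (r k : ℕ) (hr : r + 1 < m) (hk1 : 1 ≤ k) (hk : k ≤ n) :
    ∃ (R : Profile n m) (i : Fin n) (x y : Fin m), AdjAt R i x y ∧ (R i x : ℕ) = r ∧
      suppSize R x y = k := by
  let x : Fin m := ⟨r, by omega⟩
  let y : Fin m := ⟨r + 1, hr⟩
  refine ⟨fun j => if (j : ℕ) < k then 1 else Equiv.swap x y, ⟨0, by omega⟩, x, y, ?_, ?_, ?_⟩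
  · have : 0 < k := hk1
    simp [AdjAt, this, x, y]
  · have : 0 < k := hk1
    simp [this, x]
  · refine Eq.trans ?_ (aux_card_lt hk)
    unfold suppSize
    congr 1
    ext j
    simp only [mem_filter, mem_univ, true_and]
    split_ifs with h
    · simp [h, x, y]
    · simp [h, x, y]

theorem aux_exists_Delta {n m : ℕ} {F : Profile n m → Fin m → ℝ} (hF : IsSDS F)
    (hsp : Strategyproof F) (han : Anonymous F) (hneu : Neutral F) :
    ∃ Δ : ℕ → ℕ → ℝ,
      (∀ R i x y, AdjAt R i x y →
        F R x - F (swapTop R i x y) x = Δ (R i x) (suppSize R x y)) ∧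
      (∀ r k, r + 1 < m → 1 ≤ k → k ≤ n → 0 ≤ Δ r k) ∧
      (∀ r k, r + 1 < m → 1 ≤ k → k ≤ n → Δ r k = Δ r (n + 1 - k)) ∧
      (∀ r k, r + 2 < m → 1 ≤ k → k ≤ n → Δ r k + Δ (r + 1) 1 = Δ r 1 + Δ (r + 1) k) := by
  classical
  have hex : ∃ Δ : ℕ → ℕ → ℝ, ∀ R i x y, AdjAt R i x y →
        F R x - F (swapTop R i x y) x = Δ (R i x) (suppSize R x y) := by
    have : ∀ r k : ℕ, ∃ d : ℝ, ∀ R i x y, AdjAt R i x y → (R i x : ℕ) = r → suppSize R x y = k →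
        F R x - F (swapTop R i x y) x = d := by
      intro r k
      by_cases h : ∃ (R : Profile n m) (i : Fin n) (x y : Fin m), AdjAt R i x y ∧ (R i x : ℕ) = r ∧
          suppSize R x y = k
      · obtain ⟨R, i, x, y, h1, h2, h3⟩ := h
        refine ⟨F R x - F (swapTop R i x y) x, ?_⟩
        intro R2 i2 x2 y2 g1 g2 g3
        exact aux_D_eq hF hsp han hneu R R2 i i2 x y x2 y2 h1 g1 (by omega) (by omega)
      · refine ⟨0, ?_⟩
        intro R i x y h1 h2 h3
        exact absurd ⟨R, i, x, y, h1, h2, h3⟩ h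
    choose Δ hΔ using this
    exact ⟨Δ, fun R i x y h => hΔ _ _ R i x y h rfl rfl⟩
  obtain ⟨Δ, hΔ⟩ := hex
  refine ⟨Δ, hΔ, ?_, ?_, ?_⟩
  · intro r k hr hk1 hk
    obtain ⟨R, i, x, y, h1, h2, h3⟩ := aux_exists_profile (n := n) (m := m) r k hr hk1 hk
    have := hΔ R i x y h1
    rw [h2, h3] at this
    rw [← this]
    have := (aux_sp_swap hF hsp h1).2.1
    linarith
  · intro r k hr hk1 hk
    obtain ⟨R, i, x, y, h1, h2, h3⟩ := aux_exists_profile (n := n) (m := m) r k hr hk1 hk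
    have e := hΔ R i x y h1
    have e' := hΔ _ i y x (aux_swap_adj h1)
    rw [aux_swap_swap, aux_swap_y] at e'
    have s1 := aux_supp_swap_self h1
    have s2 := aux_supp_add (swapTop R i x y) x y h1.ne
    have : suppSize (swapTop R i x y) y x = n + 1 - k := by omega
    rw [this, h2] at e'
    rw [h2, h3] at e
    rw [← e, ← e']
    exact (aux_sp_swap hF hsp h1).2.2.symm
  · intro r k hr hk1 hk
    let x : Fin m := ⟨r, by omega⟩
    let y : Fin m := ⟨r + 1, by omega⟩
    let z : Fin m := ⟨r + 2, hr⟩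
    have hxy : x ≠ y := by simp [x, y]
    have hxz : x ≠ z := by simp [x, z]
    have hyz : y ≠ z := by simp [y, z]
    let i : Fin n := ⟨0, by omega⟩
    let R : Profile n m := fun j => if (j : ℕ) < 1 then 1 else
      if (j : ℕ) < k then Equiv.swap x y * Equiv.swap y z else Equiv.swap x z
    have hi : R i = 1 := by simp [R, i]
    have nxy : suppSize R x y = k := by
      rw [← aux_card_lt hk]
      unfold suppSize
      congr 1
      ext j
      simp only [mem_filter, mem_univ, true_and, R]
      split_ifs with h h'
      · have : (j : ℕ) < k := by omega
        simp [this, x, y]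
      · simp only [Equiv.Perm.mul_apply, Equiv.swap_apply_left, h', iff_true]
        rw [Equiv.swap_apply_of_ne_of_ne hxy hxz, Equiv.swap_apply_left,
          Equiv.swap_apply_of_ne_of_ne hxz.symm hyz.symm]
        simp [y, z]
      · rw [Equiv.swap_apply_left, Equiv.swap_apply_of_ne_of_ne hxy.symm hyz]
        simp [y, z, h']
    have nxz : suppSize R x z = 1 := by
      rw [← aux_card_lt (n := n) (k := 1) (by omega)]
      unfold suppSize
      congr 1
      ext j
      simp only [mem_filter, mem_univ, true_and, R]
      split_ifs with h h'
      · simp [h, x, z]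
      · simp only [Equiv.Perm.mul_apply, Equiv.swap_apply_right, h, iff_false]
        rw [Equiv.swap_apply_of_ne_of_ne hxy hxz, Equiv.swap_apply_left]
        simp [x, y]
      · rw [Equiv.swap_apply_left, Equiv.swap_apply_right]
        simp [x, z, h]
    have rx : R i x = x := by rw [hi]; rfl
    have ry : R i y = y := by rw [hi]; rfl
    have rz : R i z = z := by rw [hi]; rfl
    have vx : (x : ℕ) = r := rfl
    have vy : (y : ℕ) = r + 1 := rfl
    have vz : (z : ℕ) = r + 2 := rfl
    -- first path
    set P1 := swapTop R i x y with hP1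
    have a0 : AdjAt R i x y := by unfold AdjAt; rw [rx, ry]
    have p1x : P1 i x = y := by rw [hP1, aux_swap_x, ry]
    have p1y : P1 i y = x := by rw [hP1, aux_swap_y, rx]
    have p1z : P1 i z = z := by rw [hP1, aux_swap_z _ _ _ _ _ hxz.symm hyz.symm, rz]
    have a1 : AdjAt P1 i x z := by unfold AdjAt; rw [p1x, p1z]
    set P2 := swapTop P1 i x z with hP2
    have p2x : P2 i x = z := by rw [hP2, aux_swap_x, p1z]
    have p2z : P2 i z = y := by rw [hP2, aux_swap_y, p1x]
    have p2y : P2 i y = x := by rw [hP2, aux_swap_z _ _ _ _ _ hxy.symm hyz, p1y]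
    have a2 : AdjAt P2 i y z := by unfold AdjAt; rw [p2y, p2z]
    set P3 := swapTop P2 i y z with hP3
    -- second path
    set Q1 := swapTop R i y z with hQ1
    have b0 : AdjAt R i y z := by unfold AdjAt; rw [ry, rz]
    have q1y : Q1 i y = z := by rw [hQ1, aux_swap_x, rz]
    have q1z : Q1 i z = y := by rw [hQ1, aux_swap_y, ry]
    have q1x : Q1 i x = x := by rw [hQ1, aux_swap_z _ _ _ _ _ hxy hxz, rx]
    have b1 : AdjAt Q1 i x z := by unfold AdjAt; rw [q1x, q1z]
    set Q2 := swapTop Q1 i x z with hQ2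
    have q2x : Q2 i x = y := by rw [hQ2, aux_swap_x, q1z]
    have q2z : Q2 i z = x := by rw [hQ2, aux_swap_y, q1x]
    have q2y : Q2 i y = z := by rw [hQ2, aux_swap_z _ _ _ _ _ hxy.symm hyz, q1y]
    have b2 : AdjAt Q2 i x y := by unfold AdjAt; rw [q2x, q2y]
    set Q3 := swapTop Q2 i x y with hQ3
    have hPQ : P3 = Q3 := by
      funext j
      by_cases hj : j = i
      · subst hj
        ext w : 1
        by_cases wx : w = x
        · rw [wx, hP3, aux_swap_z _ _ _ _ _ hxy hxz, p2x, hQ3, aux_swap_x, q2y]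
        by_cases wy : w = y
        · rw [wy, hP3, aux_swap_x, p2z, hQ3, aux_swap_y, q2x]
        by_cases wz : w = z
        · rw [wz, hP3, aux_swap_y, p2y, hQ3, aux_swap_z _ _ _ _ _ hxz.symm hyz.symm, q2z]
        rw [hP3, aux_swap_z _ _ _ _ _ wy wz, hP2, aux_swap_z _ _ _ _ _ wx wz, hP1,
          aux_swap_z _ _ _ _ _ wx wy, hQ3, aux_swap_z _ _ _ _ _ wx wy, hQ2,
          aux_swap_z _ _ _ _ _ wx wz, hQ1, aux_swap_z _ _ _ _ _ wy wz]
      · rw [hP3, aux_swapTop_ne _ _ _ _ _ hj, hP2, aux_swapTop_ne _ _ _ _ _ hj, hP1,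
          aux_swapTop_ne _ _ _ _ _ hj, hQ3, aux_swapTop_ne _ _ _ _ _ hj, hQ2,
          aux_swapTop_ne _ _ _ _ _ hj, hQ1, aux_swapTop_ne _ _ _ _ _ hj]
    have d0 := hΔ _ _ _ _ a0
    have d1 := hΔ _ _ _ _ a1
    have d2 := (aux_sp_swap hF hsp a2).1 x hxy hxz
    have c0 := (aux_sp_swap hF hsp b0).1 x hxy hxz
    have c1 := hΔ _ _ _ _ b1
    have c2 := hΔ _ _ _ _ b2
    have s1 : suppSize P1 x z = 1 := by
      rw [hP1, aux_supp_swap a0 x z hxz (by simp [hyz.symm]) (by simp [hxy]), nxz]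
    have s2 : suppSize Q1 x z = 1 := by
      rw [hQ1, aux_supp_swap b0 x z hxz (by simp [hxy]) (by simp [hxz]), nxz]
    have s3 : suppSize Q2 x y = k := by
      rw [hQ2, aux_supp_swap b1 x y hxy (by simp [hyz]) (by simp [hxz]), hQ1,
        aux_supp_swap b0 x y hxy (by simp [hxy]) (by simp [hxz]), nxy]
    rw [rx, vx, nxy] at d0
    rw [p1x, vy, s1] at d1
    rw [q1x, vx, s2] at c1
    rw [q2x, vy, s3] at c2
    rw [← hP1] at d0
    rw [← hP2] at d1
    rw [← hP3, hPQ] at d2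
    rw [← hQ1] at c0
    rw [← hQ2] at c1
    rw [← hQ3] at c2
    linarith
/-- The generic combined scoring function. -/
def auxG {n m : ℕ} (a b : ℕ → ℝ) (R : Profile n m) (x : Fin m) : ℝ :=
  ∑ i, a (R i x) + ∑ y ∈ univ.filter (fun y => y ≠ x), b (suppSize R x y)

theorem aux_G_swap {n m : ℕ} (a b : ℕ → ℝ) {R : Profile n m} {i : Fin n} {x y : Fin m}
    (h : AdjAt R i x y) :
    (∀ z, z ≠ x → z ≠ y → auxG a b (swapTop R i x y) z = auxG a b R z) ∧
    auxG a b R x - auxG a b (swapTop R i x y) x =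
      (a (R i x) - a (R i x + 1)) + (b (suppSize R x y) - b (suppSize R x y - 1)) ∧
    auxG a b (swapTop R i x y) y - auxG a b R y =
      (a (R i x) - a (R i x + 1)) + (b (n + 1 - suppSize R x y) - b (n - suppSize R x y)) := by
  have hne := h.ne
  have hs := aux_supp_swap_self h
  have hs2 := aux_supp_add R x y hne
  have hs3 := aux_supp_add (swapTop R i x y) x y hne
  have first : ∀ u, ∑ j, a (R j u) - ∑ j, a (swapTop R i x y j u) =
      a (R i u) - a (swapTop R i x y i u) := by
    intro u
    rw [← sum_sub_distrib]
    apply sum_eq_single i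
    · intro j _ hj
      rw [aux_swapTop_ne _ _ _ _ _ hj, sub_self]
    · simp
  refine ⟨?_, ?_, ?_⟩
  · intro z hx hy
    unfold auxG
    congr 1
    · have := first z
      rw [aux_swap_z _ _ _ _ _ hx hy, sub_self] at this
      linarith
    · apply sum_congr rfl
      intro v hv
      simp at hv
      rw [aux_supp_swap h z v (fun h => hv h.symm) (by simp [hx]) (by simp [hy])]
  · have e := first x
    have : ∑ v ∈ univ.filter (fun v => v ≠ x), b (suppSize R x v) -
        ∑ v ∈ univ.filter (fun v => v ≠ x), b (suppSize (swapTop R i x y) x v) =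
        b (suppSize R x y) - b (suppSize (swapTop R i x y) x y) := by
      rw [← sum_sub_distrib]
      apply sum_eq_single y
      · intro v hv hvy
        simp at hv
        rw [aux_supp_swap h x v (fun h => hv h.symm) (by simp [hvy]) (by simp [hne]), sub_self]
      · simp [hne.symm]
    have e2 : suppSize (swapTop R i x y) x y = suppSize R x y - 1 := by omega
    rw [aux_swap_x] at e
    unfold AdjAt at h
    rw [h] at e
    rw [e2] at this
    unfold auxG
    linarith
  · have e := first y
    have : ∑ v ∈ univ.filter (fun v => v ≠ y), b (suppSize R y v) -
        ∑ v ∈ univ.filter (fun v => v ≠ y), b (suppSize (swapTop R i x y) y v) =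
        b (suppSize R y x) - b (suppSize (swapTop R i x y) y x) := by
      rw [← sum_sub_distrib]
      apply sum_eq_single x
      · intro v hv hvx
        simp at hv
        rw [aux_supp_swap h y v (fun h => hv h.symm) (by simp [hne.symm]) (by simp [hvx]), sub_self]
      · simp [hne]
    have e2 : suppSize (swapTop R i x y) y x = n + 1 - suppSize R x y := by omega
    have e3 : suppSize R y x = n - suppSize R x y := by omega
    rw [aux_swap_y] at e
    unfold AdjAt at h
    rw [h] at e
    rw [e2, e3] at this
    unfold auxG
    linarith

theorem aux_G_neutral {n m : ℕ} (a b : ℕ → ℝ) (τ : Equiv.Perm (Fin m)) (R : Profile n m)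
    (x : Fin m) : auxG a b (relabel τ R) (τ x) = auxG a b R x := by
  unfold auxG
  congr 1
  · simp [relabel]
  · rw [sum_filter, sum_filter, ← Equiv.sum_comp τ]
    apply sum_congr rfl
    intro y _
    simp [relabel, suppSize]

theorem aux_repr {n m : ℕ} (hm : 2 ≤ m) {F : Profile n m → Fin m → ℝ} (hF : IsSDS F)
    (hsp : Strategyproof F) (han : Anonymous F) (hneu : Neutral F) :
    ∃ (a b : ℕ → ℝ) (h : ℝ), (∀ R x, F R x = auxG a b R x + h) ∧
      (∀ r s, r ≤ s → s + 1 ≤ m → a s ≤ a r) ∧ a (m - 1) = 0 ∧ b 0 = 0 ∧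
      (∀ k l, k ≤ l → l ≤ n → b k ≤ b l) ∧ (∀ k, k ≤ n → b k + b (n - k) = b n) := by
  obtain ⟨Δ, hΔ, hpos, hsymm, hhex⟩ := aux_exists_Delta hF hsp han hneu
  obtain ⟨r0, hr0, hmin⟩ := exists_min_image (range (m - 1)) (fun r => Δ r 1)
    ⟨0, by simp; omega⟩
  simp only [mem_range] at hr0 hmin
  have hadd0 : ∀ k, 1 ≤ k → k ≤ n → ∀ r, r + 1 < m → Δ r k - Δ r 1 = Δ 0 k - Δ 0 1 := by
    intro k hk1 hk r
    induction r with
    | zero => intro _; rfl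
    | succ r ih =>
      intro hr
      have := hhex r k (by omega) hk1 hk
      have := ih (by omega)
      linarith
  have hadd : ∀ k, 1 ≤ k → k ≤ n → ∀ r, r + 1 < m → Δ r k = Δ r0 k + (Δ r 1 - Δ r0 1) := by
    intro k hk1 hk r hr
    have h1 := hadd0 k hk1 hk r hr
    have h2 := hadd0 k hk1 hk r0 (by omega)
    linarith
  let a : ℕ → ℝ := fun r => ∑ s ∈ Ico r (m - 1), (Δ s 1 - Δ r0 1)
  let b : ℕ → ℝ := fun k => ∑ j ∈ range k, Δ r0 (j + 1)
  have ha : ∀ r, r + 1 < m → a r - a (r + 1) = Δ r 1 - Δ r0 1 := by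
    intro r hr
    simp only [a]
    rw [sum_eq_sum_Ico_succ_bot (by omega)]
    ring
  have hb : ∀ k, b (k + 1) - b k = Δ r0 (k + 1) := by
    intro k
    simp only [b]
    rw [sum_range_succ]
    ring
  have hsw : ∀ R i x y, AdjAt R i x y → ∀ u, F R u - auxG a b R u =
      F (swapTop R i x y) u - auxG a b (swapTop R i x y) u := by
    intro R i x y h u
    obtain ⟨g1, g2, g3⟩ := aux_G_swap a b h
    obtain ⟨f1, -, f3⟩ := aux_sp_swap hF hsp h
    have f2 := hΔ R i x y h
    have hs := aux_supp_swap_self h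
    have hs2 := aux_supp_add R x y h.ne
    have hr : (R i x : ℕ) + 1 < m := by
      have := (R i y).2
      unfold AdjAt at h
      omega
    have k1 : 1 ≤ suppSize R x y := by omega
    have kn : suppSize R x y ≤ n := by omega
    rw [hadd _ k1 kn _ hr] at f2
    rw [ha _ hr] at g2 g3
    have b1 := hb (suppSize R x y - 1)
    rw [Nat.sub_add_cancel k1] at b1
    have b2 := hb (n - suppSize R x y)
    have e : n - suppSize R x y + 1 = n + 1 - suppSize R x y := by omega
    rw [e, ← hsymm r0 _ (by omega) k1 kn] at b2
    by_cases hx : u = x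
    · subst hx; linarith
    by_cases hy : u = y
    · subst hy; linarith
    rw [f1 u hx hy, g1 u hx hy]
  let T : Profile n m := fun _ => 1
  have hconst : ∀ R, ∀ u, F R u - auxG a b R u = F T u - auxG a b T u := by
    apply aux_induction T
    · intro u; rfl
    · intro R i x y h _ ih u
      rw [hsw R i x y h u, ih u]
  let x0 : Fin m := ⟨0, by omega⟩
  have hconst2 : ∀ u, F T u - auxG a b T u = F T x0 - auxG a b T x0 := by
    intro u
    have := hconst (relabel (Equiv.swap x0 u) T) (Equiv.swap x0 u x0)
    rw [hneu, aux_G_neutral, Equiv.swap_apply_left] at this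
    exact this.symm
  refine ⟨a, b, F T x0 - auxG a b T x0, ?_, ?_, ?_, ?_, ?_, ?_⟩
  · intro R x
    rw [← hconst2 x, ← hconst R x]
    ring
  · intro r s hrs hs
    apply sum_le_sum_of_subset_of_nonneg
    · apply Ico_subset_Ico hrs le_rfl
    · intro j hj _
      simp at hj
      have := hmin j hj.2
      linarith
  · simp [a]
  · simp [b]
  · intro k l hkl hl
    apply sum_le_sum_of_subset_of_nonneg
    · simpa using hkl
    · intro j hj _
      simp at hj
      exact hpos _ _ (by omega) (by omega) (by omega)
  · intro k
    induction k with
    | zero => intro _; simp [b]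
    | succ k ih =>
      intro hk
      have h1 := ih (by omega)
      have h2 := hb k
      have h3 := hb (n - (k + 1))
      have e1 : n - (k + 1) + 1 = n - k := by omega
      have e2 : n + 1 - (k + 1) = n - k := by omega
      rw [e1] at h3
      have h4 := hsymm r0 (k + 1) (by omega) (by omega) hk
      rw [e2] at h4
      linarith
theorem aux_G_id {n m : ℕ} (a b : ℕ → ℝ) (hb : b 0 = 0) (x : Fin m) :
    auxG a b (fun _ => 1 : Profile n m) x = n * a x + ((m : ℝ) - 1 - (x : ℕ)) * b n := by
  unfold auxG
  congr 1
  · simp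
  · have : ∀ y ∈ univ.filter (fun y => y ≠ x), b (suppSize (fun _ => 1 : Profile n m) x y) =
        if x < y then b n else 0 := by
      intro y _
      by_cases h : x < y
      · simp [suppSize, h]
      · simp [suppSize, h, hb]
    rw [sum_congr rfl this, sum_filter, ]
    have : ∀ y : Fin m, (if y ≠ x then (if x < y then b n else 0) else 0) =
        if x < y then b n else 0 := by
      intro y
      by_cases h : x < y
      · simp [h, h.ne']
      · simp [h]
    simp only [this]
    rw [← sum_filter, sum_const, nsmul_eq_mul]
    congr 1
    have hc : (univ.filter (fun y => x < y)).card = m - 1 - (x : ℕ) := by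
      rw [← Fin.card_Ioi]
      congr 1
      ext y
      simp
    rw [hc]
    have := x.2
    rw [Nat.cast_sub (by omega), Nat.cast_sub (by omega)]
    simp

theorem aux_gauss (N : ℕ) : ∑ k ∈ range N, (k : ℝ) = N * ((N : ℝ) - 1) / 2 := by
  induction N with
  | zero => simp
  | succ N ih => rw [sum_range_succ, ih]; push_cast; ring

theorem aux_dict {n m : ℕ} (hm : 0 < m) (R : Profile n m) (i : Fin n) (x : Fin m) :
    dictProb R i x = if (R i x : ℕ) = 0 then 1 else 0 := by
  unfold dictProb
  congr 1
  apply propext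
  constructor
  · intro h
    have := h ((R i).symm ⟨0, hm⟩)
    simpa [Fin.le_def] using this
  · intro h y
    rw [Fin.le_def, h]
    exact Nat.zero_le _

/-- The profile with alternative `0` second everywhere and tops spread over three alternatives. -/
theorem aux_profile2 {n m : ℕ} (hm : 4 ≤ m) (hn : 5 ≤ n) :
    ∃ R : Profile n m, (∀ i, (R i ⟨0, by omega⟩ : ℕ) = 1) ∧ CondorcetWinner R ⟨0, by omega⟩ ∧
      suppSize R ⟨0, by omega⟩ ⟨1, by omega⟩ = n - (n - 1) / 2 := by
  set q := (n - 1) / 2 with hq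
  let x : Fin m := ⟨0, by omega⟩
  let o : Fin m := ⟨1, by omega⟩
  let t : Fin n → Fin m := fun i =>
    if (i : ℕ) < q then o else if (i : ℕ) < 2 * q then ⟨2, by omega⟩ else ⟨3, by omega⟩
  have htx : ∀ i, t i ≠ x := by
    intro i
    simp only [t, o, x]
    split_ifs <;> simp
  have hox : o ≠ x := by simp [o, x]
  let R : Profile n m := fun i => Equiv.swap (t i) o * Equiv.swap x (t i)
  have hRx : ∀ i, R i x = o := by
    intro i
    simp [R]
  have hRt : ∀ i, R i (t i) = x := by
    intro i
    simp only [R, Equiv.Perm.mul_apply, Equiv.swap_apply_right]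
    rw [Equiv.swap_apply_of_ne_of_ne (htx i).symm hox.symm]
  have hlt : ∀ i y, R i y < R i x ↔ t i = y := by
    intro i y
    rw [hRx]
    constructor
    · intro h
      have : R i y = x := by
        apply Fin.ext
        have : (R i y : ℕ) < 1 := h
        simp only [x]
        omega
      rw [← hRt i] at this
      exact ((R i).injective this).symm
    · rintro rfl
      rw [hRt]
      simp [x, o]
  have hsupp : ∀ y, suppSize R y x = (univ.filter (fun i => t i = y)).card := by
    intro y
    unfold suppSize
    simp only [hlt]
  have hc1 : (univ.filter (fun i => t i = o)).card = q := by
    refine Eq.trans ?_ (aux_card_lt (n := n) (k := q) (by omega))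
    congr 1
    ext i
    simp only [mem_filter, mem_univ, true_and, t, o]
    split_ifs with h1 h2 <;> simp [h1]
  have hle : ∀ y, (univ.filter (fun i => t i = y)).card ≤ q := by
    intro y
    by_cases h1 : y = o
    · rw [h1, hc1]
    by_cases h2 : (y : ℕ) = 2
    · have : (univ.filter (fun i => t i = y)) ⊆
          (univ.filter (fun i : Fin n => (i : ℕ) < 2 * q)) \ univ.filter (fun i : Fin n => (i : ℕ) < q) := by
        intro i
        simp only [mem_filter, mem_univ, true_and, mem_sdiff, t]
        intro h
        split_ifs at h with g1 g2
        · exact absurd h.symm h1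
        · exact ⟨g2, g1⟩
        · rw [← h] at h2; simp at h2
      refine (card_le_card this).trans ?_
      rw [card_sdiff_of_subset, aux_card_lt (by omega), aux_card_lt (by omega)]
      · omega
      · intro i
        simp only [mem_filter, mem_univ, true_and]
        omega
    · have : (univ.filter (fun i => t i = y)) ⊆
          univ \ univ.filter (fun i : Fin n => (i : ℕ) < 2 * q) := by
        intro i
        simp only [mem_filter, mem_univ, true_and, mem_sdiff, t]
        intro h
        split_ifs at h with g1 g2
        · exact absurd h.symm h1
        · rw [← h] at h2; simp at h2
        · exact g2
      refine (card_le_card this).trans ?_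
      rw [card_sdiff_of_subset (subset_univ _), aux_card_lt (by omega)]
      simp only [card_univ, Fintype.card_fin]
      omega
  refine ⟨R, fun i => congrArg Fin.val (hRx i), ?_, ?_⟩
  · intro y hy
    have := aux_supp_add R y x hy
    have h1 := hle y
    rw [← hsupp] at h1
    change suppSize R y x < suppSize R x y
    omega
  · have := aux_supp_add R o x hox
    rw [hsupp, hc1] at this
    change suppSize R x o = _
    omega

/-- For `m ≥ 4` and `n ≥ 5`, every strategyproof, anonymous,
neutral SDS that is `α`-Condorcet-consistent and `β`-ex post efficient with
`β = (m-2)/(m-1)·α` is a convex combination of the uniform random dictatorship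
and the randomized Copeland rule. -/
theorem mixture_of_uniformRD_and_randCopeland (n m : ℕ) (hm : 4 ≤ m) (hn : 5 ≤ n)
    (α : ℝ) (F : Profile n m → Fin m → ℝ) (hF : IsSDS F) (hsp : Strategyproof F)
    (han : Anonymous F) (hneu : Neutral F)
    (hcc : CondorcetConsistent F α)
    (heff : ExPostEff F (((m : ℝ) - 2) / ((m : ℝ) - 1) * α)) :
    ∃ lam : ℝ, 0 ≤ lam ∧ lam ≤ 1 ∧
      ∀ R x, F R x = lam * uniformRD n m R x + (1 - lam) * randCopeland n m R x := by
  obtain ⟨a, b, h, hrep, ha, ham, hb0, hb, hbs⟩ := aux_repr (by omega) hF hsp han hneu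
  set q := (n - 1) / 2 with hq
  have hmR : (4 : ℝ) ≤ m := by exact_mod_cast hm
  have hnR : (5 : ℝ) ≤ n := by exact_mod_cast hn
  let T : Profile n m := fun _ => 1
  have hid : ∀ x : Fin m, F T x = n * a x + ((m : ℝ) - 1 - (x : ℕ)) * b n + h := by
    intro x
    rw [hrep, aux_G_id a b hb0]
  have hh : 0 ≤ h := by
    have h1 := hid ⟨m - 1, by omega⟩
    have h2 := hF.1 T ⟨m - 1, by omega⟩
    simp only at h1
    rw [ham, Nat.cast_sub (by omega)] at h1
    simp at h1
    linarith
  have ha1 : 0 ≤ a 1 := by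
    rw [← ham]
    exact ha _ _ (by omega) (by omega)
  have hbn : b (n - q) ≤ b n := hb _ _ (by omega) le_rfl
  have hpar : n * a 1 + ((m : ℝ) - 2) * b n + h ≤ ((m : ℝ) - 2) / ((m : ℝ) - 1) * α := by
    have h1 := heff T ⟨1, by omega⟩ ⟨⟨0, by omega⟩, fun i => by simp [T]⟩
    rw [hid] at h1
    simp only [Nat.cast_one] at h1
    linarith
  obtain ⟨R2, hR2, hcw, hs2⟩ := aux_profile2 hm hn
  have hcon : α ≤ n * a 1 + (((m : ℝ) - 2) * b n + b (n - q)) + h := by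
    have h1 := hcc R2 _ hcw
    rw [hrep] at h1
    have h2 : auxG a b R2 ⟨0, by omega⟩ ≤ n * a 1 + (((m : ℝ) - 2) * b n + b (n - q)) := by
      unfold auxG
      simp only [hR2]
      gcongr
      · simp
      · rw [← add_sum_erase _ _ (a := (⟨1, by omega⟩ : Fin m)) (by simp), hs2, add_comm]
        gcongr
        have : ((m : ℝ) - 2) * b n = ∑ y ∈ (univ.filter
            (fun y : Fin m => y ≠ ⟨0, by omega⟩)).erase ⟨1, by omega⟩, b n := by
          rw [sum_const, nsmul_eq_mul, card_erase_of_mem (by simp), filter_ne',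
            card_erase_of_mem (mem_univ _), card_univ, Fintype.card_fin, Nat.cast_sub (by omega),
            Nat.cast_sub (by omega)]
          push_cast
          ring
        rw [this]
        apply sum_le_sum
        intro y hy
        simp at hy
        have := aux_supp_add R2 ⟨0, by omega⟩ y (fun h => hy.2 h.symm)
        exact hb _ _ (by omega) le_rfl
    linarith
  have hfin : (n * a 1 + h) + ((m : ℝ) - 2) * (b n - b (n - q)) ≤ 0 := by
    have hm1 : (0 : ℝ) < (m : ℝ) - 1 := by linarith
    have h1 : ((m : ℝ) - 1) * (n * a 1 + ((m : ℝ) - 2) * b n + h) ≤ ((m : ℝ) - 2) * α := by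
      calc _ ≤ ((m : ℝ) - 1) * (((m : ℝ) - 2) / ((m : ℝ) - 1) * α) :=
            mul_le_mul_of_nonneg_left hpar hm1.le
        _ = _ := by field_simp
    have h2 := mul_le_mul_of_nonneg_left hcon (show (0 : ℝ) ≤ (m : ℝ) - 2 by linarith)
    linarith
  have hna : 0 ≤ n * a 1 := by positivity
  have hbb : 0 ≤ ((m : ℝ) - 2) * (b n - b (n - q)) :=
    mul_nonneg (by linarith) (by linarith)
  have hh0 : h = 0 := by linarith
  have ha10 : a 1 = 0 := by
    have : n * a 1 = 0 := by linarith
    rcases mul_eq_zero.1 this with h | h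
    · linarith
    · exact h
  have hbq : b (n - q) = b n := by
    have : ((m : ℝ) - 2) * (b n - b (n - q)) = 0 := by linarith
    rcases mul_eq_zero.1 this with h | h
    · linarith
    · linarith
  have haz : ∀ r, 1 ≤ r → r < m → a r = 0 := by
    intro r h1 h2
    apply le_antisymm
    · rw [← ha10]; exact ha _ _ h1 (by omega)
    · rw [← ham]; exact ha _ _ (by omega) (by omega)
  have hsum : n * a 0 + b n * (m * ((m : ℝ) - 1) / 2) = 1 := by
    refine Eq.trans ?_ (hF.2 T)
    simp only [hid, hh0, add_zero]
    rw [Fin.sum_univ_eq_sum_range (fun k => n * a k + ((m : ℝ) - 1 - (k : ℕ)) * b n) m,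
      sum_add_distrib, ← sum_mul, sum_sub_distrib, aux_gauss, sum_const, card_range, nsmul_eq_mul]
    rw [sum_eq_single 0]
    · ring
    · intro k hk hk0
      rw [haz k (by omega) (by simpa using hk), mul_zero]
    · intro h
      simp at h
      omega
  have ha0 : 0 ≤ a 0 := by
    rw [← ham]; exact ha _ _ (by omega) (by omega)
  have hbn0 : 0 ≤ b n := by rw [← hb0]; exact hb _ _ (by omega) le_rfl
  have hmm : 0 < (m : ℝ) * ((m : ℝ) - 1) := mul_pos (by linarith) (by linarith)
  have hm1 : (m : ℝ) - 1 ≠ 0 := by linarith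
  refine ⟨n * a 0, by positivity, ?_, ?_⟩
  · have : 0 ≤ b n * (m * ((m : ℝ) - 1) / 2) := by positivity
    linarith
  · intro R x
    have e1 : 1 - n * a 0 = b n * (m * ((m : ℝ) - 1) / 2) := by linarith
    rw [e1, hrep, hh0, add_zero]
    unfold auxG uniformRD randCopeland
    congr 1
    · rw [mul_sum, mul_sum]
      apply sum_congr rfl
      intro i _
      rw [aux_dict (by omega)]
      have hn0 : (n : ℝ) ≠ 0 := by linarith
      split_ifs with h0
      · rw [h0]; field_simp
      · rw [haz _ (by omega) (R i x).2]; ring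
    · rw [mul_sum]
      apply sum_congr rfl
      intro y hy
      simp at hy
      have hk : suppSize R x y ≤ n := by
        have := aux_supp_add R x y (fun h => hy h.symm)
        omega
      generalize suppSize R x y = k at hk
      have big : ∀ l, l ≤ n → n < 2 * l → b l = b n := by
        intro l hl h2
        apply le_antisymm (hb _ _ hl le_rfl)
        rw [← hbq]
        exact hb _ _ (by omega) hl
      have hs := hbs k hk
      unfold copelandWeight
      split_ifs with c1 c2
      · rw [big k hk c1]
        field_simp
      · have : n - k = k := by omega
        rw [this] at hs
        rw [← hs]
        field_simp
        ring
      · rw [big (n - k) (by omega) (by omega)] at hs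
        rw [mul_zero]
        linarith
end
end

section
/- If there exists a strategyproof SDS (for n voters and m alternatives) that is α-Condorcet-consistent for some α ∈ [0,1], then there also exists a strategyproof SDS (for the same n and m) that is anonymous, neutral, and α-Condorcet-consistent for the same α. -/
open Finset

noncomputable section

/-- The scheme `F` with voters permuted by `π` and alternatives by `τ`. -/
def actSDS {n m : ℕ} (F : Profile n m → Fin m → ℝ)
    (g : Equiv.Perm (Fin n) × Equiv.Perm (Fin m)) : Profile n m → Fin m → ℝ :=
  fun R x => F (relabel g.2 (fun i => R (g.1 i))) (g.2 x)

theorem actSDS_isSDS {n m : ℕ} {F : Profile n m → Fin m → ℝ} (hF : IsSDS F)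
    (g : Equiv.Perm (Fin n) × Equiv.Perm (Fin m)) : IsSDS (actSDS F g) := by
  refine ⟨fun R x => hF.1 _ _, fun R => ?_⟩
  unfold actSDS
  rw [Equiv.sum_comp g.2 (fun x => F (relabel g.2 (fun i => R (g.1 i))) x)]
  exact hF.2 _

theorem actSDS_sp {n m : ℕ} {F : Profile n m → Fin m → ℝ} (hF : Strategyproof F)
    (g : Equiv.Perm (Fin n) × Equiv.Perm (Fin m)) : Strategyproof (actSDS F g) := by
  intro R R' i hR x
  have key := hF (relabel g.2 (fun i => R (g.1 i))) (relabel g.2 (fun i => R' (g.1 i)))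
    (g.1.symm i) (by
      intro j hj
      have : g.1 j ≠ i := by
        rintro rfl
        simp at hj
      simp only [relabel, hR _ this]) (g.2 x)
  have conv : ∀ q : Fin m → ℝ,
      ∑ y ∈ univ.filter (fun y => (relabel g.2 (fun i => R (g.1 i))) (g.1.symm i) y <
        (relabel g.2 (fun i => R (g.1 i))) (g.1.symm i) (g.2 x)), q y =
      ∑ y ∈ univ.filter (fun y => R i y < R i x), q (g.2 y) := by
    intro q
    rw [Finset.sum_filter, Finset.sum_filter, ← Equiv.sum_comp g.2]
    simp [relabel]
  rw [conv, conv] at key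
  exact key

theorem actSDS_cc {n m : ℕ} {F : Profile n m → Fin m → ℝ} {α : ℝ}
    (hF : CondorcetConsistent F α)
    (g : Equiv.Perm (Fin n) × Equiv.Perm (Fin m)) :
    CondorcetConsistent (actSDS F g) α := by
  intro R x hx
  have hs : ∀ a b : Fin m, suppSize (relabel g.2 (fun i => R (g.1 i))) (g.2 a) (g.2 b)
      = suppSize R a b := by
    intro a b
    simp only [suppSize, Finset.card_filter]
    rw [← Equiv.sum_comp g.1 (fun i => if R i a < R i b then 1 else 0)]
    simp [relabel]
  refine hF _ _ fun y hy => ?_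
  obtain ⟨z, rfl⟩ := g.2.surjective y
  rw [hs, hs]
  exact hx z (fun h => hy (by rw [h]))

/-- The average of `F` over all permutations of voters and alternatives. -/
def avgSDS {n m : ℕ} (F : Profile n m → Fin m → ℝ) : Profile n m → Fin m → ℝ :=
  fun R x => (Fintype.card (Equiv.Perm (Fin n) × Equiv.Perm (Fin m)) : ℝ)⁻¹ *
    ∑ g : Equiv.Perm (Fin n) × Equiv.Perm (Fin m), actSDS F g R x

/-- If there is a strategyproof and `α`-Condorcet-consistent SDS
(for `n` voters and `m` alternatives, `α ∈ [0,1]`), then there is also a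
strategyproof SDS for the same `n` and `m` that is anonymous, neutral, and
`α`-Condorcet-consistent. -/
theorem exists_anonymous_neutral_of_exists (n m : ℕ) (α : ℝ)
    (hα0 : 0 ≤ α) (hα1 : α ≤ 1)
    (h : ∃ F : Profile n m → Fin m → ℝ,
      IsSDS F ∧ Strategyproof F ∧ CondorcetConsistent F α) :
    ∃ F : Profile n m → Fin m → ℝ,
      IsSDS F ∧ Strategyproof F ∧ Anonymous F ∧ Neutral F ∧
        CondorcetConsistent F α := by
  obtain ⟨F, hS, hP, hC⟩ := h
  have hc : (0 : ℝ) < (Fintype.card (Equiv.Perm (Fin n) × Equiv.Perm (Fin m)) : ℝ) := by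
    exact_mod_cast Fintype.card_pos
  refine ⟨avgSDS F, ⟨fun R x => ?_, fun R => ?_⟩, ?_, ?_, ?_, ?_⟩
  · exact mul_nonneg (inv_nonneg.2 hc.le)
      (Finset.sum_nonneg fun g _ => (actSDS_isSDS hS g).1 R x)
  · unfold avgSDS
    rw [← Finset.mul_sum, Finset.sum_comm,
      Finset.sum_congr rfl fun g _ => (actSDS_isSDS hS g).2 R]
    rw [Finset.sum_const, Finset.card_univ, nsmul_eq_mul, mul_one]
    exact inv_mul_cancel₀ hc.ne'
  · intro R R' i hR x
    unfold avgSDS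
    rw [← Finset.mul_sum, ← Finset.mul_sum, Finset.sum_comm, Finset.sum_comm (t := univ)]
    exact mul_le_mul_of_nonneg_left
      (Finset.sum_le_sum fun g _ => actSDS_sp hP g R R' i hR x) (inv_nonneg.2 hc.le)
  · intro π R
    funext x
    unfold avgSDS
    congr 1
    exact Fintype.sum_equiv ((Equiv.mulLeft π).prodCongr (Equiv.refl _)) _ _
      (fun g => by simp [actSDS])
  · intro τ R x
    unfold avgSDS
    congr 1
    refine Fintype.sum_equiv ((Equiv.refl _).prodCongr (Equiv.mulRight τ)) _ _
      (fun g => ?_)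
    have : relabel g.2 (fun i => relabel τ R (g.1 i)) =
        relabel (g.2 * τ) (fun i => R (g.1 i)) := by
      funext i
      ext y
      simp [relabel, Equiv.Perm.mul_def]
    simp [actSDS, this]
  · intro R x hx
    unfold avgSDS
    rw [inv_mul_eq_div, le_div_iff₀ hc]
    have := Finset.card_nsmul_le_sum (univ : Finset (Equiv.Perm (Fin n) × Equiv.Perm (Fin m)))
      (fun g => actSDS F g R x) α (fun g _ => actSDS_cc hC g R x hx)
    rw [Finset.card_univ, nsmul_eq_mul] at this
    linarith
end
end
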